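/- The square root of the arc length functional is globally Lipschitz continuous with respect to the geodesic distance of G: for all γ₀, γ₁ ∈ 𝓜 one has |√(L(γ₁)) − √(L(γ₀))| ≤ (1/2) · d_G(γ₁, γ₀). In particular, L is bounded on every G-bounded subset of 𝓜. -/

import Mathlib

open MeasureTheory Real Filter Set
open scoped ENNReal Topology RealInnerProductSpace

noncomputable section

/-- Euclidean space `ℝⁿ`. -/
abbrev En (n : ℕ) : Type := EuclideanSpace ℝ (Fin n)

/-- A fundamental domain for the circle `𝕋 = ℝ/ℤ`. -/
def I01 : Set ℝ := Set.Ico (0 : ℝ) 1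

/-- The intrinsic distance on `𝕋 = ℝ/ℤ`, expressed for real representatives. -/
def dT (x y : ℝ) : ℝ := ⨅ k : ℤ, |x - y - (k : ℝ)|

/-- Supremum norm of a (periodic) function on the circle. -/
def supNorm {E : Type*} [NormedAddCommGroup E] (f : ℝ → E) : ℝ := ⨆ x : ℝ, ‖f x‖

/-- The squared Gagliardo seminorm `[v]_{H^σ}²` of a function on the circle, valued in `[0,∞]`. -/
def gagliardoSqE {E : Type*} [NormedAddCommGroup E] (σ : ℝ) (v : ℝ → E) : ℝ≥0∞ :=
  ∫⁻ x in I01, ∫⁻ y in I01, ENNReal.ofReal (‖v y - v x‖ ^ 2 / dT x y ^ (2 * σ + 1))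

/-- Membership in the Sobolev–Slobodeckij space `H^s(𝕋, ℝⁿ)`; for `s ∈ (3/2,2)` such
functions have a `C¹` representative, which we take as the defining data. -/
def InHs {n : ℕ} (s : ℝ) (u : ℝ → En n) : Prop :=
  Function.Periodic u 1 ∧ ContDiff ℝ 1 u ∧ gagliardoSqE (s - 1) (deriv u) < ⊤

/-- The squared `H^s` norm `‖u‖²_{L²} + ‖u'‖²_{L²} + [u']²_{H^{s-1}}`. -/
def HsNormSq {n : ℕ} (s : ℝ) (u : ℝ → En n) : ℝ :=
  (∫ x in I01, ‖u x‖ ^ 2) + (∫ x in I01, ‖deriv u x‖ ^ 2) +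
    (gagliardoSqE (s - 1) (deriv u)).toReal

/-- The `H^s` norm. -/
def HsNorm {n : ℕ} (s : ℝ) (u : ℝ → En n) : ℝ := Real.sqrt (HsNormSq s u)

/-- The `H^s` inner product. -/
def HsInner {n : ℕ} (s : ℝ) (u v : ℝ → En n) : ℝ :=
  (∫ x in I01, ⟪u x, v x⟫) + (∫ x in I01, ⟪deriv u x, deriv v x⟫) +
    ∫ x in I01, ∫ y in I01,
      ⟪deriv u y - deriv u x, deriv v y - deriv v x⟫ / dT x y ^ (2 * (s - 1) + 1)

/-- The manifold `𝓜` of embedded closed curves of class `H^s`: injective (on the circle)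
immersions. -/
def InM {n : ℕ} (s : ℝ) (γ : ℝ → En n) : Prop :=
  InHs s γ ∧ Set.InjOn γ I01 ∧ ∀ x, deriv γ x ≠ 0

/-- The length `L(γ)`. -/
def arcLen {n : ℕ} (γ : ℝ → En n) : ℝ := ∫ x in I01, ‖deriv γ x‖

/-- The arc-length distance `d_γ(x,y)`: the length of the shorter of the two arcs of `γ`
between `x` and `y`. -/
def arcDist {n : ℕ} (γ : ℝ → En n) (x y : ℝ) : ℝ :=
  ⨅ k : ℤ, |∫ t in x..(y + (k : ℝ)), ‖deriv γ t‖|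

/-- Derivative with respect to arc length, `D_γ u = u' / |γ'|`. -/
def Dg {n : ℕ} (γ u : ℝ → En n) (x : ℝ) : En n := ‖deriv γ x‖⁻¹ • deriv u x

/-- `𝒟_γ u (x)`, the pointwise linear map `w ↦ |γ'(x)|⁻² ⟪γ'(x), w⟫ u'(x)`. -/
def DDg {n : ℕ} (γ u : ℝ → En n) (x : ℝ) (w : En n) : En n :=
  ((‖deriv γ x‖ ^ 2)⁻¹ * ⟪deriv γ x, w⟫) • deriv u x

/-- The operator `R^s_γ`. -/
def Rop {n : ℕ} (s : ℝ) (γ u : ℝ → En n) (x y : ℝ) : En n :=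
  (‖γ y - γ x‖ ^ s)⁻¹ • (u y - u x - DDg γ u x (γ y - γ x))

/-- Density of the measure `μ_γ` with respect to `λ ⊗ λ` on `𝕋 × 𝕋`. -/
def muW {n : ℕ} (γ : ℝ → En n) (x y : ℝ) : ℝ :=
  ‖deriv γ x‖ * ‖deriv γ y‖ / ‖γ y - γ x‖

/-- Density of the measure `ν_γ` with respect to `λ ⊗ λ` on `𝕋 × 𝕋`. -/
def nuW {n : ℕ} (γ : ℝ → En n) (x y : ℝ) : ℝ :=
  ‖deriv γ x‖ * ‖deriv γ y‖ / arcDist γ x y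

/-- The tangent-point energy, valued in `[0,∞]`. -/
def EtpE {n : ℕ} (s : ℝ) (γ : ℝ → En n) : ℝ≥0∞ :=
  ∫⁻ x in I01, ∫⁻ y in I01, ENNReal.ofReal (‖Rop s γ γ x y‖ ^ 2 * muW γ x y)

/-- The tangent-point energy, real-valued (finite on `𝓜`). -/
def Etp {n : ℕ} (s : ℝ) (γ : ℝ → En n) : ℝ := (EtpE s γ).toReal

/-- `‖R^s_γ u‖²_{L²(ν_γ)}`, valued in `[0,∞]`. -/
def RnuSqE {n : ℕ} (s : ℝ) (γ u : ℝ → En n) : ℝ≥0∞ :=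
  ∫⁻ x in I01, ∫⁻ y in I01, ENNReal.ofReal (‖Rop s γ u x y‖ ^ 2 * nuW γ x y)

/-- `‖R^s_γ u‖²_{L²(ν_γ)}`, real-valued. -/
def RnuSq {n : ℕ} (s : ℝ) (γ u : ℝ → En n) : ℝ := (RnuSqE s γ u).toReal

/-- The squared `γ`-dependent seminorm `[u]²_{H^s(γ)}`, valued in `[0,∞]`. -/
def gagGammaSqE {n : ℕ} (s : ℝ) (γ u : ℝ → En n) : ℝ≥0∞ :=
  ∫⁻ x in I01, ∫⁻ y in I01,
    ENNReal.ofReal (‖Dg γ u y - Dg γ u x‖ ^ 2 / arcDist γ x y ^ (2 * (s - 1)) * nuW γ x y)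

/-- The squared `γ`-dependent seminorm `[u]²_{H^s(γ)}`, real-valued. -/
def gagGammaSq {n : ℕ} (s : ℝ) (γ u : ℝ → En n) : ℝ := (gagGammaSqE s γ u).toReal

/-- The inner product `⟨u,v⟩_{L²(γ)}`. -/
def innerL2g {n : ℕ} (γ u v : ℝ → En n) : ℝ := ∫ x in I01, ⟪u x, v x⟫ * ‖deriv γ x‖

/-- The inner product `⟨u,v⟩_{H¹(γ)}`. -/
def innerH1g {n : ℕ} (γ u v : ℝ → En n) : ℝ :=
  ∫ x in I01, ⟪Dg γ u x, Dg γ v x⟫ * ‖deriv γ x‖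

/-- The squared `γ`-dependent norm `‖u‖²_{H^s(γ)}`. -/
def HsGammaNormSq {n : ℕ} (s : ℝ) (γ u : ℝ → En n) : ℝ :=
  innerL2g γ u u + innerH1g γ u u + gagGammaSq s γ u

/-- The `γ`-dependent norm `‖u‖_{H^s(γ)}`. -/
def HsGammaNorm {n : ℕ} (s : ℝ) (γ u : ℝ → En n) : ℝ := Real.sqrt (HsGammaNormSq s γ u)

/-- The bilinear form `B¹_γ`. -/
def B1 {n : ℕ} (s : ℝ) (γ u v : ℝ → En n) : ℝ :=
  ∫ x in I01, ∫ y in I01, ⟪Rop s γ u x y, Rop s γ v x y⟫ * muW γ x y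

/-- The bilinear form `B²_γ`. -/
def B2 {n : ℕ} (s : ℝ) (γ u v : ℝ → En n) : ℝ :=
  ∫ x in I01, ∫ y in I01,
    ‖Rop s γ γ x y‖ ^ 2 * (⟪u y - u x, v y - v x⟫ / ‖γ y - γ x‖ ^ 2) * muW γ x y

/-- The bilinear form `B³_γ`. -/
def B3 {n : ℕ} (s : ℝ) (γ u v : ℝ → En n) : ℝ :=
  ∫ x in I01, ∫ y in I01,
    ‖Rop s γ γ x y‖ ^ 2 * (⟪Dg γ u x, Dg γ v x⟫ + ⟪Dg γ u y, Dg γ v y⟫) * muW γ x y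

/-- The Riemannian metric `G_γ(u,v)`. -/
def Gmet {n : ℕ} (s : ℝ) (γ u v : ℝ → En n) : ℝ :=
  2 * B1 s γ u v + (2 * s + 1) * B2 s γ u v + B3 s γ u v + innerH1g γ u v + innerL2g γ u v

/-- The distortion `distor(γ) = sup_{x ≠ y} d_γ(x,y)/|γ(y) − γ(x)|`, valued in `[0,∞]`. -/
def distorE {n : ℕ} (γ : ℝ → En n) : ℝ≥0∞ :=
  ⨆ (x ∈ I01) (y ∈ I01) (_ : x ≠ y), ENNReal.ofReal (arcDist γ x y / ‖γ y - γ x‖)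

/-- The distortion, real-valued. -/
def distor {n : ℕ} (γ : ℝ → En n) : ℝ := (distorE γ).toReal

/-- A `C¹` path `[0,1] → 𝓜 ⊂ H^s(𝕋,ℝⁿ)` (with respect to the `H^s` topology), recorded
together with its velocity field `V`. -/
structure C1Path (s : ℝ) (n : ℕ) where
  Γ : ℝ → ℝ → En n
  V : ℝ → ℝ → En n
  mem : ∀ t ∈ Set.Icc (0 : ℝ) 1, InM s (Γ t)
  memV : ∀ t ∈ Set.Icc (0 : ℝ) 1, InHs s (V t)
  isDeriv : ∀ t ∈ Set.Icc (0 : ℝ) 1,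
    Tendsto (fun h : ℝ => HsNorm s fun x => h⁻¹ • (Γ (t + h) x - Γ t x) - V t x)
      (𝓝[{h : ℝ | t + h ∈ Set.Icc (0 : ℝ) 1 ∧ h ≠ 0}] 0) (𝓝 0)
  contV : ∀ t ∈ Set.Icc (0 : ℝ) 1,
    Tendsto (fun τ : ℝ => HsNorm s fun x => V τ x - V t x) (𝓝[Set.Icc (0 : ℝ) 1] t) (𝓝 0)

/-- Length of a path with respect to `G`. -/
def pathLen {s : ℝ} {n : ℕ} (P : C1Path s n) : ℝ :=
  ∫ t in (0 : ℝ)..1, Real.sqrt (Gmet s (P.Γ t) (P.V t) (P.V t))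

/-- The path (Dirichlet) energy of a path with respect to `G`. -/
def pathEnergy {s : ℝ} {n : ℕ} (P : C1Path s n) : ℝ :=
  (1 / 2) * ∫ t in (0 : ℝ)..1, Gmet s (P.Γ t) (P.V t) (P.V t)

/-- The geodesic distance induced by `G`, valued in `[0,∞]` (`∞` if there is no path). -/
def geodDist (s : ℝ) {n : ℕ} (γ₀ γ₁ : ℝ → En n) : ℝ≥0∞ :=
  ⨅ (P : C1Path s n) (_ : P.Γ 0 = γ₀ ∧ P.Γ 1 = γ₁), ENNReal.ofReal (pathLen P)

/-- `U ⊆ 𝓜` is bounded with respect to the geodesic distance `d_G`. -/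
def GBounded (s : ℝ) {n : ℕ} (U : Set (ℝ → En n)) : Prop :=
  (∀ γ ∈ U, InM s γ) ∧
    ∃ γ₀, InM s γ₀ ∧ ∃ R : ℝ, ∀ γ ∈ U, geodDist s γ γ₀ ≤ ENNReal.ofReal R

/-- Weak convergence in the Hilbert space `H^s(𝕋,ℝⁿ)`. -/
def WeakHsTendsto {n : ℕ} (s : ℝ) (γk : ℕ → ℝ → En n) (γ : ℝ → En n) : Prop :=
  ∀ v : ℝ → En n, InHs s v →
    Tendsto (fun k => HsInner s (γk k) v) atTop (𝓝 (HsInner s γ v))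

/-- Directional derivative of `γ ↦ G_γ(u,v)` at `γ` in direction `w`. -/
def DGdir {n : ℕ} (s : ℝ) (γ w u v : ℝ → En n) : ℝ :=
  deriv (fun t : ℝ => Gmet s (fun x => γ x + t • w x) u v) 0

/-- `F'` is the derivative of the path `F` with respect to the `H^s` norm, on `S`. -/
def IsHsDerivOn {n : ℕ} (s : ℝ) (F F' : ℝ → ℝ → En n) (S : Set ℝ) : Prop :=
  ∀ t ∈ S,
    Tendsto (fun h : ℝ => HsNorm s fun x => h⁻¹ • (F (t + h) x - F t x) - F' t x)
      (𝓝[{h : ℝ | t + h ∈ S ∧ h ≠ 0}] 0) (𝓝 0)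

/-- The path `F` is continuous on `S` with respect to the `H^s` norm. -/
def HsContOn {n : ℕ} (s : ℝ) (F : ℝ → ℝ → En n) (S : Set ℝ) : Prop :=
  ∀ t ∈ S, Tendsto (fun τ : ℝ => HsNorm s fun x => F τ x - F t x) (𝓝[S] t) (𝓝 0)

/-- A solution of the geodesic initial value problem on `[0,∞)`, recorded as a triple
(position `Γ`, velocity `V`, acceleration `W`); the geodesic equation
`Γ̈ + A_Γ(Γ̇)Γ̇ = 0` is expressed weakly via the Koszul formula for the
Christoffel operator `A`. -/
def GeodesicSol {n : ℕ} (s : ℝ) (γ₀ v₀ : ℝ → En n) (Γ V W : ℝ → ℝ → En n) : Prop :=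
  (∀ t ∈ Set.Ici (0 : ℝ), InM s (Γ t) ∧ InHs s (V t) ∧ InHs s (W t)) ∧
  Γ 0 = γ₀ ∧ V 0 = v₀ ∧
  IsHsDerivOn s Γ V (Set.Ici 0) ∧ IsHsDerivOn s V W (Set.Ici 0) ∧
  HsContOn s V (Set.Ici 0) ∧ HsContOn s W (Set.Ici 0) ∧
  ∀ t ∈ Set.Ici (0 : ℝ), ∀ w : ℝ → En n, InHs s w →
    Gmet s (Γ t) (W t) w + DGdir s (Γ t) (V t) (V t) w
      - (1 / 2) * DGdir s (Γ t) w (V t) (V t) = 0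

/-!
Along a `C¹` path `γ_t` with velocity `v_t`, the length satisfies
`dL/dt = ∫ ⟪D_γ γ, D_γ v⟫ dω_γ = ⟪γ, v⟫_{H¹(γ)}`, so that `|dL/dt| ≤ √L · √G_γ(v, v)` by
Cauchy–Schwarz, `⟪v, v⟫_{H¹(γ)}` being one of the nonnegative summands of `G_γ(v, v)`. Hence
`|d√L/dt| ≤ ½ √G_γ(v, v)`, and integrating along the path gives the Lipschitz bound.

Since the Bochner integral of a non-integrable function is `0`, integrating requires `√G` to be
integrable along the path. It is bounded because the curves `γ_t` are uniformly chord-arc, by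
compactness of `[0, 1]`, and because the Taylor remainder in `R^s_γ u` is controlled by the
Gagliardo seminorm of `u'`. The Morrey embedding of `H^{s-1}` into the continuous functions gives
the joint continuity of `γ_t` and `v_t` and of their derivatives which both arguments need.
-/

section Circle

lemma dT_eq_norm (x y : ℝ) : dT x y = ‖((x - y : ℝ) : UnitAddCircle)‖ := by
  rw [UnitAddCircle.norm_eq]
  exact le_antisymm (ciInf_le ⟨0, by rintro _ ⟨k, rfl⟩; positivity⟩ _)
    (le_ciInf fun k => round_le _ k)

lemma dT_nonneg (x y : ℝ) : 0 ≤ dT x y := dT_eq_norm x y ▸ norm_nonneg _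

@[fun_prop]
lemma measurable_dT : Measurable fun p : ℝ × ℝ => dT p.1 p.2 := by
  simp only [dT_eq_norm]
  exact ((AddCircle.continuous_mk' 1).comp (by fun_prop)).norm.measurable

lemma dT_le_abs_sub (x y : ℝ) : dT x y ≤ |x - y| := by
  rw [dT_eq_norm, UnitAddCircle.norm_eq]
  simpa using round_le (x - y) 0

lemma dT_add_right_of_abs_le (x : ℝ) {h : ℝ} (hh : |h| ≤ 1 / 2) : dT x (x + h) = |h| := by
  rw [dT_eq_norm, (AddCircle.norm_coe_eq_abs_iff (1 : ℝ) one_ne_zero).2]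
  · simp
  · simpa using hh

lemma dT_periodic_left (y : ℝ) : Function.Periodic (dT · y) 1 := fun x => by
  simp [dT_eq_norm, add_sub_right_comm]

lemma dT_periodic_right (x : ℝ) : Function.Periodic (dT x) 1 := fun y => by
  simp [dT_eq_norm, ← sub_sub, AddCircle.coe_period]

lemma eq_of_dT_eq_zero {α : Type*} {v : ℝ → α} (hv : Function.Periodic v 1) {x y : ℝ}
    (h : dT x y = 0) : v x = v y := by
  rw [dT_eq_norm, norm_eq_zero, AddCircle.coe_eq_zero_iff] at h
  obtain ⟨k, hk⟩ := h
  rw [← hv.zsmul k y, hk, add_sub_cancel]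

lemma periodic_deriv {E : Type*} [NormedAddCommGroup E] [NormedSpace ℝ E] {u : ℝ → E}
    (hu : Function.Periodic u 1) : Function.Periodic (deriv u) 1 := fun x => by
  rw [← deriv_comp_add_const, funext hu]

instance isProbabilityMeasure_restrict_I01 : IsProbabilityMeasure (volume.restrict I01) :=
  ⟨by simp [I01]⟩

lemma integrableOn_I01 {E : Type*} [NormedAddCommGroup E] {f : ℝ → E} (hf : Continuous f) :
    IntegrableOn f I01 :=
  hf.integrableOn_Icc.mono_set Ico_subset_Icc_self

lemma setLIntegral_I01_eq_Ioc {f : ℝ → ℝ≥0∞} (hf : Function.Periodic f 1) (a : ℝ) :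
    ∫⁻ x in I01, f x = ∫⁻ x in Ioc a (a + 1), f x := by
  have lift (b : ℝ) : ∫⁻ x in Ioc b (b + 1), f x = ∫⁻ z : UnitAddCircle, hf.lift z :=
    UnitAddCircle.lintegral_preimage b hf.lift
  rw [lift a, ← lift 0, zero_add]
  exact setLIntegral_congr Ico_ae_eq_Ioc

/-- The period centred at `0`: the offsets `h` with `dT x (x + h) = |h|`, in terms of which
double integrals over the circle are rewritten. -/
def centeredPeriod : Set ℝ := Ioc (-(1 / 2)) (1 / 2)

lemma measurableSet_centeredPeriod : MeasurableSet centeredPeriod := measurableSet_Ioc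

lemma abs_le_of_mem_centeredPeriod {h : ℝ} (hh : h ∈ centeredPeriod) : |h| ≤ 1 / 2 :=
  abs_le.2 ⟨hh.1.le, hh.2⟩

lemma setLIntegral_I01_eq_centeredPeriod {f : ℝ → ℝ≥0∞} (hf : Function.Periodic f 1) (x : ℝ) :
    ∫⁻ y in I01, f y = ∫⁻ h in centeredPeriod, f (x + h) := by
  have preimage : (x + ·) ⁻¹' Ioc (x - 1 / 2) (x - 1 / 2 + 1) = centeredPeriod := by
    rw [preimage_const_add_Ioc, centeredPeriod]
    congr 1 <;> ring
  rw [setLIntegral_I01_eq_Ioc hf (x - 1 / 2), ← preimage]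
  exact ((measurePreserving_add_left volume x).setLIntegral_comp_preimage_emb
    (measurableEmbedding_addLeft x) f _).symm

end Circle

section Averages

variable {α β E : Type*} {mα : MeasurableSpace α} {mβ : MeasurableSpace β}
  [NormedAddCommGroup E] [NormedSpace ℝ E]

lemma enorm_integral_sq_le {μ : Measure α} [IsProbabilityMeasure μ] {f : α → E}
    (hf : AEStronglyMeasurable f μ) : ‖∫ x, f x ∂μ‖ₑ ^ 2 ≤ ∫⁻ x, ‖f x‖ₑ ^ 2 ∂μ := by
  have L2 : eLpNorm f 2 μ ^ 2 = ∫⁻ x, ‖f x‖ₑ ^ 2 ∂μ := by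
    simpa using eLpNorm_nnreal_pow_eq_lintegral (f := f) (μ := μ) (p := 2) two_ne_zero
  have L1_le_L2 : eLpNorm f 1 μ ≤ eLpNorm f 2 μ :=
    eLpNorm_le_eLpNorm_of_exponent_le one_le_two hf
  rw [← L2]
  gcongr
  exact (enorm_integral_le_lintegral_enorm f).trans
    (eLpNorm_one_eq_lintegral_enorm (f := f) ▸ L1_le_L2)

lemma enorm_average_sub_average_sq_le [CompleteSpace E] {μ : Measure α} {ν : Measure β}
    [IsFiniteMeasure μ] [NeZero μ] [IsFiniteMeasure ν] [NeZero ν] {f : α → E} {g : β → E}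
    (hf : Integrable f μ) (hg : Integrable g ν) :
    ‖(⨍ x, f x ∂μ) - ⨍ y, g y ∂ν‖ₑ ^ 2 ≤ ⨍⁻ x, ⨍⁻ y, ‖f x - g y‖ₑ ^ 2 ∂ν ∂μ := by
  have hf' := hf.to_average
  have hg' := hg.to_average
  calc ‖(⨍ x, f x ∂μ) - ⨍ y, g y ∂ν‖ₑ ^ 2
      = ‖⨍ x, (f x - ⨍ y, g y ∂ν) ∂μ‖ₑ ^ 2 := by
        simp only [average, integral_sub hf' (integrable_const _), integral_const, probReal_univ,
          one_smul]
    _ ≤ ⨍⁻ x, ‖f x - ⨍ y, g y ∂ν‖ₑ ^ 2 ∂μ :=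
        enorm_integral_sq_le (hf'.sub (integrable_const _)).aestronglyMeasurable
    _ = ⨍⁻ x, ‖⨍ y, (f x - g y) ∂ν‖ₑ ^ 2 ∂μ := by
        simp only [average, integral_sub (integrable_const _) hg', integral_const, probReal_univ,
          one_smul]
    _ ≤ ⨍⁻ x, ⨍⁻ y, ‖f x - g y‖ₑ ^ 2 ∂ν ∂μ :=
        lintegral_mono fun x =>
          enorm_integral_sq_le ((integrable_const _).sub hg').aestronglyMeasurable

end Averages

section Gagliardo

variable {E : Type*} [NormedAddCommGroup E] {σ : ℝ} {v : ℝ → E}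

lemma lintegral_lintegral_add_left {α β : Type*} [MeasurableSpace α] [MeasurableSpace β]
    {μ : Measure α} {ν : Measure β} [SFinite ν] {f : α → β → ℝ≥0∞}
    (hf : Measurable (Function.uncurry f)) (g : α → β → ℝ≥0∞) :
    ∫⁻ x, ∫⁻ y, (f x y + g x y) ∂ν ∂μ = (∫⁻ x, ∫⁻ y, f x y ∂ν ∂μ) + ∫⁻ x, ∫⁻ y, g x y ∂ν ∂μ := by
  rw [← lintegral_add_left hf.lintegral_prod_right]
  exact lintegral_congr fun x => lintegral_add_left hf.of_uncurry_left _

lemma lintegral_lintegral_const_mul {α β : Type*} [MeasurableSpace α] [MeasurableSpace β]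
    {μ : Measure α} {ν : Measure β} {c : ℝ≥0∞} (hc : c ≠ ⊤) (f : α → β → ℝ≥0∞) :
    ∫⁻ x, ∫⁻ y, c * f x y ∂ν ∂μ = c * ∫⁻ x, ∫⁻ y, f x y ∂ν ∂μ := by
  simp only [lintegral_const_mul' c _ hc]

lemma measurable_gagliardo_integrand (σ : ℝ) (hv : Continuous v) :
    Measurable (Function.uncurry fun x y =>
      ENNReal.ofReal (‖v y - v x‖ ^ 2 / dT x y ^ (2 * σ + 1))) := by
  have numerator : Continuous fun p : ℝ × ℝ => ‖v p.2 - v p.1‖ ^ 2 := by fun_prop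
  exact (numerator.measurable.div (measurable_dT.pow_const _)).ennreal_ofReal

lemma gagliardoSqE_eq_Ioc (σ : ℝ) (hv : Function.Periodic v 1) (a b : ℝ) :
    gagliardoSqE σ v = ∫⁻ x in Ioc a (a + 1), ∫⁻ y in Ioc b (b + 1),
      ENNReal.ofReal (‖v y - v x‖ ^ 2 / dT x y ^ (2 * σ + 1)) := by
  rw [gagliardoSqE, setLIntegral_I01_eq_Ioc (fun x => by simp only [hv x, dT_periodic_left _ x])]
  refine lintegral_congr fun x => setLIntegral_I01_eq_Ioc (fun y => ?_) b
  simp only [hv y, dT_periodic_right x y]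

lemma gagliardoSqE_eq_centeredPeriod (σ : ℝ) (hv : Function.Periodic v 1) :
    gagliardoSqE σ v = ∫⁻ x in I01, ∫⁻ h in centeredPeriod,
      ENNReal.ofReal (‖v (x + h) - v x‖ ^ 2 / |h| ^ (2 * σ + 1)) := by
  refine lintegral_congr fun x => ?_
  rw [setLIntegral_I01_eq_centeredPeriod (fun y => by simp only [hv y, dT_periodic_right x y]) x]
  refine setLIntegral_congr_fun measurableSet_centeredPeriod fun h hh => ?_
  simp only [dT_add_right_of_abs_le x (abs_le_of_mem_centeredPeriod hh)]

lemma gagliardoSqE_add_le (σ : ℝ) (hv : Continuous v) (w : ℝ → E) :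
    gagliardoSqE σ (fun x => v x + w x) ≤ 2 * (gagliardoSqE σ v + gagliardoSqE σ w) := by
  simp only [gagliardoSqE]
  rw [← lintegral_lintegral_add_left (measurable_gagliardo_integrand σ hv),
    ← lintegral_lintegral_const_mul ENNReal.ofNat_ne_top]
  refine lintegral_mono fun x => lintegral_mono fun y => ?_
  have hD : 0 ≤ dT x y ^ (2 * σ + 1) := rpow_nonneg (dT_nonneg x y) _
  rw [← ENNReal.ofReal_add (by positivity) (by positivity), ← ENNReal.ofReal_ofNat 2,
    ← ENNReal.ofReal_mul zero_le_two, ← add_div, ← mul_div_assoc, add_sub_add_comm]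
  gcongr
  exact (pow_le_pow_left₀ (norm_nonneg _) (norm_add_le _ _) 2).trans add_sq_le

lemma gagliardoSqE_const_smul [NormedSpace ℝ E] (σ c : ℝ) (v : ℝ → E) :
    gagliardoSqE σ (fun x => c • v x) = ENNReal.ofReal (c ^ 2) * gagliardoSqE σ v := by
  simp only [gagliardoSqE]
  rw [← lintegral_lintegral_const_mul ENNReal.ofReal_ne_top]
  refine lintegral_congr fun x => lintegral_congr fun y => ?_
  rw [← ENNReal.ofReal_mul (sq_nonneg c), ← smul_sub, norm_smul, mul_pow, norm_eq_abs, sq_abs,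
    mul_div_assoc]

end Gagliardo

section Morrey

variable {E : Type*} [NormedAddCommGroup E] {σ : ℝ} {v : ℝ → E}

lemma setLIntegral_enorm_sub_sq_le_gagliardoSqE (hσ : -1 / 2 ≤ σ) (hv : Function.Periodic v 1)
    (x : ℝ) {a b : ℝ} (hba : b ≤ a) (ha : a ≤ 1) :
    ∫⁻ y in Ioc x (x + a), ∫⁻ z in Ioc x (x + b), ‖v y - v z‖ₑ ^ 2 ≤
      ENNReal.ofReal (a ^ (2 * σ + 1)) * gagliardoSqE σ v := by
  rw [gagliardoSqE_eq_Ioc σ hv x x, ← lintegral_lintegral_const_mul ENNReal.ofReal_ne_top]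
  refine le_trans (setLIntegral_mono' measurableSet_Ioc fun y hy =>
    setLIntegral_mono' measurableSet_Ioc fun z hz => ?_)
    ((lintegral_mono_set (Ioc_subset_Ioc_right (by linarith))).trans
      (lintegral_mono fun y => lintegral_mono_set (Ioc_subset_Ioc_right (by linarith))))
  obtain hd | hd := (dT_nonneg y z).eq_or_lt
  · simp [eq_of_dT_eq_zero hv hd.symm]
  have dT_le : dT y z ≤ a :=
    (dT_le_abs_sub y z).trans (abs_le.2 ⟨by linarith [hy.1, hz.2], by linarith [hy.2, hz.1]⟩)
  have a_nonneg : 0 ≤ a := hd.le.trans dT_le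
  rw [← ofReal_norm, norm_sub_rev, ← ENNReal.ofReal_pow (norm_nonneg _),
    ← ENNReal.ofReal_mul (by positivity)]
  refine ENNReal.ofReal_le_ofReal ?_
  rw [mul_div_assoc', le_div_iff₀ (by positivity), mul_comm]
  gcongr
  linarith

variable [NormedSpace ℝ E] [CompleteSpace E]

lemma norm_setAverage_sub_setAverage_half_le (hσ : -1 / 2 ≤ σ) (hv : Function.Periodic v 1)
    (hc : Continuous v) (hg : gagliardoSqE σ v ≠ ⊤) (x : ℝ) {r : ℝ} (hr : 0 < r) (hr1 : r ≤ 1) :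
    ‖(⨍ y in Ioc x (x + r), v y) - ⨍ y in Ioc x (x + r / 2), v y‖ ≤
      √2 * r ^ (σ - 1 / 2) * √(gagliardoSqE σ v).toReal := by
  have volume_ne_zero {b : ℝ} (hb : 0 < b) : NeZero (volume.restrict (Ioc x (x + b))) :=
    ⟨by simp [hb]⟩
  have := volume_ne_zero hr
  have := volume_ne_zero (half_pos hr)
  have hi (b : ℝ) : IntegrableOn v (Ioc x (x + b)) := hc.integrableOn_Ioc
  have jensen := enorm_average_sub_average_sq_le (hi r) (hi (r / 2))
  simp only [setLAverage_eq, volume_Ioc, add_sub_cancel_left, ENNReal.div_eq_inv_mul] at jensen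
  rw [lintegral_const_mul' _ _ (by simp [hr])] at jensen
  have scaling : r⁻¹ * (r / 2)⁻¹ * r ^ (2 * σ + 1) = (√2 * r ^ (σ - 1 / 2)) ^ 2 := by
    rw [mul_pow, sq_sqrt zero_le_two, ← rpow_mul_natCast hr.le,
      show 2 * σ + 1 = (σ - 1 / 2) * (2 : ℕ) + (2 : ℕ) by push_cast; ring, rpow_add_natCast hr.ne']
    field_simp
  have enorm_sq_le : ‖(⨍ y in Ioc x (x + r), v y) - ⨍ y in Ioc x (x + r / 2), v y‖ₑ ^ 2 ≤
      ENNReal.ofReal ((√2 * r ^ (σ - 1 / 2)) ^ 2) * gagliardoSqE σ v := by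
    refine jensen.trans ((mul_le_mul_right (mul_le_mul_right
      (setLIntegral_enorm_sub_sq_le_gagliardoSqE hσ hv x (half_le_self hr.le) hr1) _) _).trans_eq
        ?_)
    rw [← scaling, ENNReal.ofReal_mul (by positivity), ENNReal.ofReal_mul (by positivity),
      ENNReal.ofReal_inv_of_pos hr, ENNReal.ofReal_inv_of_pos (half_pos hr), mul_assoc, mul_assoc]
  have norm_sq_le := ENNReal.toReal_mono (ENNReal.mul_ne_top ENNReal.ofReal_ne_top hg) enorm_sq_le
  rw [ENNReal.toReal_mul, ENNReal.toReal_pow, toReal_enorm,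
    ENNReal.toReal_ofReal (by positivity)] at norm_sq_le
  refine (pow_le_pow_iff_left₀ (norm_nonneg _) (by positivity) two_ne_zero).1 ?_
  rwa [mul_pow, sq_sqrt ENNReal.toReal_nonneg]

/-- The constant in Morrey's inequality: the sum of the geometric series
`∑ k, √2 * (2 ^ (-k)) ^ (σ - 1 / 2)` of distances between successive dyadic averages. -/
def morreyConst (σ : ℝ) : ℝ := √2 / (1 - (1 / 2) ^ (σ - 1 / 2))

lemma half_rpow_lt_one (hσ : 1 / 2 < σ) : (1 / 2 : ℝ) ^ (σ - 1 / 2) < 1 :=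
  rpow_lt_one (by norm_num) (by norm_num) (by linarith)

lemma morreyConst_nonneg (hσ : 1 / 2 < σ) : 0 ≤ morreyConst σ :=
  div_nonneg (sqrt_nonneg 2) (sub_nonneg.2 (half_rpow_lt_one hσ).le)

lemma tendsto_setAverage_Ioc_half_pow (hc : Continuous v) (x : ℝ) :
    Tendsto (fun k : ℕ => ⨍ y in Ioc x (x + (1 / 2) ^ k), v y) atTop (𝓝 (v x)) := by
  have slope := (intervalIntegral.integral_hasDerivAt_right (hc.intervalIntegrable x x)
    (hc.stronglyMeasurableAtFilter _ _) hc.continuousAt).tendsto_slope_zero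
  have radius : Tendsto (fun k : ℕ => (1 / 2 : ℝ) ^ k) atTop (𝓝[≠] 0) :=
    tendsto_nhdsWithin_iff.2 ⟨tendsto_pow_atTop_nhds_zero_of_lt_one (by norm_num) (by norm_num),
      Eventually.of_forall fun k => by simp⟩
  refine (slope.comp radius).congr fun k => ?_
  have hk : x ≤ x + (1 / 2) ^ k := by simp
  rw [← uIoc_of_le hk, interval_average_eq]
  simp

theorem norm_sub_setAverage_le_gagliardoSqE (hσ : 1 / 2 < σ) (hv : Function.Periodic v 1)
    (hc : Continuous v) (hg : gagliardoSqE σ v ≠ ⊤) (x : ℝ) :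
    ‖v x - ⨍ y in Ioc x (x + 1), v y‖ ≤ morreyConst σ * √(gagliardoSqE σ v).toReal := by
  have step (k : ℕ) : dist (⨍ y in Ioc x (x + (1 / 2) ^ k), v y)
      (⨍ y in Ioc x (x + (1 / 2) ^ (k + 1)), v y) ≤
      √2 * √(gagliardoSqE σ v).toReal * ((1 / 2) ^ (σ - 1 / 2)) ^ k := by
    rw [dist_eq_norm, pow_succ, mul_one_div]
    refine (norm_setAverage_sub_setAverage_half_le (by linarith) hv hc hg x (by positivity)
      (pow_le_one₀ (by norm_num) (by norm_num))).trans_eq ?_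
    rw [← rpow_pow_comm (by norm_num)]
    ring
  have geometric := dist_le_of_le_geometric_of_tendsto₀ _ _ (half_rpow_lt_one hσ) step
    (tendsto_setAverage_Ioc_half_pow hc x)
  rw [pow_zero, dist_comm, dist_eq_norm] at geometric
  exact geometric.trans_eq (by rw [morreyConst]; ring)

end Morrey

section SobolevSpace

variable {n : ℕ} {s : ℝ} {u v : ℝ → En n}

namespace InHs

lemma continuous (hu : InHs s u) : Continuous u := hu.2.1.continuous

lemma differentiable (hu : InHs s u) : Differentiable ℝ u := hu.2.1.differentiable one_ne_zero

lemma continuous_deriv (hu : InHs s u) : Continuous (deriv u) := hu.2.1.continuous_deriv le_rfl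

lemma deriv_add (hu : InHs s u) (hv : InHs s v) :
    deriv (fun x => u x + v x) = fun x => deriv u x + deriv v x :=
  funext fun x => deriv_fun_add (hu.differentiable x) (hv.differentiable x)

lemma deriv_sub (hu : InHs s u) (hv : InHs s v) :
    deriv (fun x => u x - v x) = fun x => deriv u x - deriv v x :=
  funext fun x => deriv_fun_sub (hu.differentiable x) (hv.differentiable x)

lemma deriv_const_smul (c : ℝ) (hu : InHs s u) :
    deriv (fun x => c • u x) = fun x => c • deriv u x :=
  funext fun x => deriv_fun_const_smul c (hu.differentiable x)

lemma const_smul (c : ℝ) (hu : InHs s u) : InHs s (fun x => c • u x) := by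
  refine ⟨fun x => by simp only [hu.1 x], hu.2.1.const_smul c, ?_⟩
  rw [hu.deriv_const_smul, gagliardoSqE_const_smul]
  exact ENNReal.mul_lt_top ENNReal.ofReal_lt_top hu.2.2

lemma add (hu : InHs s u) (hv : InHs s v) : InHs s (fun x => u x + v x) := by
  refine ⟨fun x => by simp only [hu.1 x, hv.1 x], hu.2.1.add hv.2.1, ?_⟩
  rw [hu.deriv_add hv]
  exact (gagliardoSqE_add_le _ hu.continuous_deriv _).trans_lt
    (ENNReal.mul_lt_top ENNReal.ofNat_lt_top (ENNReal.add_lt_top.2 ⟨hu.2.2, hv.2.2⟩))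

lemma sub (hu : InHs s u) (hv : InHs s v) : InHs s (fun x => u x - v x) := by
  simpa only [neg_one_smul, ← sub_eq_add_neg] using hu.add (hv.const_smul (-1))

end InHs

lemma setIntegral_norm_sq_nonneg {f : ℝ → En n} : 0 ≤ ∫ x in I01, ‖f x‖ ^ 2 :=
  integral_nonneg fun _ => by positivity

lemma HsNormSq_nonneg (s : ℝ) (u : ℝ → En n) : 0 ≤ HsNormSq s u :=
  add_nonneg (add_nonneg setIntegral_norm_sq_nonneg setIntegral_norm_sq_nonneg)
    ENNReal.toReal_nonneg

lemma HsNorm_nonneg (s : ℝ) (u : ℝ → En n) : 0 ≤ HsNorm s u := sqrt_nonneg _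

lemma setIntegral_norm_sq_le_HsNorm_sq (s : ℝ) (u : ℝ → En n) :
    ∫ x in I01, ‖u x‖ ^ 2 ≤ HsNorm s u ^ 2 := by
  rw [HsNorm, sq_sqrt (HsNormSq_nonneg s u), HsNormSq, add_assoc]
  exact le_add_of_nonneg_right (add_nonneg setIntegral_norm_sq_nonneg ENNReal.toReal_nonneg)

lemma gagliardoSqE_deriv_le_HsNorm_sq (s : ℝ) (u : ℝ → En n) :
    (gagliardoSqE (s - 1) (deriv u)).toReal ≤ HsNorm s u ^ 2 := by
  rw [HsNorm, sq_sqrt (HsNormSq_nonneg s u), HsNormSq]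
  exact le_add_of_nonneg_left (add_nonneg setIntegral_norm_sq_nonneg setIntegral_norm_sq_nonneg)

lemma HsNorm_const_smul (c : ℝ) (hu : InHs s u) :
    HsNorm s (fun x => c • u x) = |c| * HsNorm s u := by
  have normSq : HsNormSq s (fun x => c • u x) = c ^ 2 * HsNormSq s u := by
    rw [HsNormSq, hu.deriv_const_smul, gagliardoSqE_const_smul, ENNReal.toReal_mul,
      ENNReal.toReal_ofReal (sq_nonneg c)]
    simp only [norm_smul, mul_pow, norm_eq_abs, sq_abs, integral_const_mul, HsNormSq]
    ring
  rw [HsNorm, normSq, sqrt_mul (sq_nonneg c), sqrt_sq_eq_abs, HsNorm]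

lemma setIntegral_norm_add_sq_le {f g : ℝ → En n} (hf : Continuous f) (hg : Continuous g) :
    ∫ x in I01, ‖f x + g x‖ ^ 2 ≤ 2 * ((∫ x in I01, ‖f x‖ ^ 2) + ∫ x in I01, ‖g x‖ ^ 2) := by
  have hi {f : ℝ → En n} (hf : Continuous f) : IntegrableOn (fun x => ‖f x‖ ^ 2) I01 :=
    integrableOn_I01 (by fun_prop)
  rw [← integral_add (hi hf) (hi hg), ← integral_const_mul]
  refine integral_mono (hi (hf.add hg)) (((hi hf).add (hi hg)).const_mul 2) fun x => ?_
  exact (pow_le_pow_left₀ (norm_nonneg _) (norm_add_le _ _) 2).trans add_sq_le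

lemma HsNormSq_add_le (hu : InHs s u) (hv : InHs s v) :
    HsNormSq s (fun x => u x + v x) ≤ 2 * (HsNormSq s u + HsNormSq s v) := by
  have seminorm := ENNReal.toReal_mono
    (ENNReal.mul_ne_top ENNReal.ofNat_ne_top (ENNReal.add_ne_top.2 ⟨hu.2.2.ne, hv.2.2.ne⟩))
    (gagliardoSqE_add_le (s - 1) hu.continuous_deriv (deriv v))
  rw [ENNReal.toReal_mul, ENNReal.toReal_ofNat, ENNReal.toReal_add hu.2.2.ne hv.2.2.ne] at seminorm
  simp only [HsNormSq, hu.deriv_add hv]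
  linarith [setIntegral_norm_add_sq_le hu.continuous hv.continuous,
    setIntegral_norm_add_sq_le hu.continuous_deriv hv.continuous_deriv]

lemma HsNorm_add_le (hu : InHs s u) (hv : InHs s v) :
    HsNorm s (fun x => u x + v x) ≤ √2 * (HsNorm s u + HsNorm s v) := by
  refine sqrt_le_iff.2 ⟨by have := HsNorm_nonneg s u; have := HsNorm_nonneg s v; positivity, ?_⟩
  rw [mul_pow, sq_sqrt zero_le_two]
  have hu2 : HsNorm s u ^ 2 = HsNormSq s u := sq_sqrt (HsNormSq_nonneg s u)
  have hv2 : HsNorm s v ^ 2 = HsNormSq s v := sq_sqrt (HsNormSq_nonneg s v)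
  nlinarith [HsNormSq_add_le hu hv, mul_nonneg (HsNorm_nonneg s u) (HsNorm_nonneg s v)]

lemma norm_setIntegral_sq_le {f : ℝ → En n} (hf : Continuous f) :
    ‖∫ x in I01, f x‖ ^ 2 ≤ ∫ x in I01, ‖f x‖ ^ 2 := by
  have hi : IntegrableOn (fun x => ‖f x‖ ^ 2) I01 := integrableOn_I01 (by fun_prop)
  have jensen := enorm_integral_sq_le (integrableOn_I01 hf).aestronglyMeasurable
  simp only [← ofReal_norm, ← ENNReal.ofReal_pow (norm_nonneg _)] at jensen
  rwa [← ofReal_integral_eq_lintegral_ofReal hi (ae_of_all _ fun x => by positivity),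
    ENNReal.ofReal_le_ofReal_iff setIntegral_norm_sq_nonneg] at jensen

lemma norm_deriv_le_HsNorm (hs : 3 / 2 < s) (hu : InHs s u) (x : ℝ) :
    ‖deriv u x‖ ≤ morreyConst (s - 1) * HsNorm s u := by
  have hσ : 1 / 2 < s - 1 := by linarith
  have mean_zero : ⨍ y in Ioc x (x + 1), deriv u y = 0 := by
    rw [← uIoc_of_le (by linarith), interval_average_eq,
      intervalIntegral.integral_deriv_eq_sub (fun y _ => hu.differentiable y)
        (hu.continuous_deriv.intervalIntegrable _ _), hu.1 x, sub_self, smul_zero]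
  have morrey := norm_sub_setAverage_le_gagliardoSqE hσ (periodic_deriv hu.1) hu.continuous_deriv
    hu.2.2.ne x
  rw [mean_zero, sub_zero] at morrey
  refine morrey.trans (mul_le_mul_of_nonneg_left ?_ (morreyConst_nonneg hσ))
  exact sqrt_le_iff.2 ⟨HsNorm_nonneg s u, gagliardoSqE_deriv_le_HsNorm_sq s u⟩

lemma norm_sub_integral_le (hu : Function.Periodic u 1) (hc : ContDiff ℝ 1 u) {K : ℝ}
    (hK : ∀ x, ‖deriv u x‖ ≤ K) (x : ℝ) : ‖u x - ∫ y in I01, u y‖ ≤ K := by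
  have one_period : ∫ y in I01, u y = ∫ y in x..x + 1, u y := by
    rw [hu.intervalIntegral_add_eq x 0, zero_add, intervalIntegral.integral_of_le zero_le_one,
      I01, integral_Ico_eq_integral_Ioc]
  have lipschitz (y : ℝ) : ‖u x - u y‖ ≤ K * ‖x - y‖ :=
    convex_univ.norm_image_sub_le_of_norm_deriv_le
      (fun z _ => hc.differentiable one_ne_zero z) (fun z _ => hK z) (mem_univ y) (mem_univ x)
  have oscillation : ‖∫ y in x..x + 1, (u x - u y)‖ ≤ K * |x + 1 - x| := by
    refine intervalIntegral.norm_integral_le_of_norm_le_const fun y hy => ?_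
    rw [uIoc_of_le (by linarith)] at hy
    refine (lipschitz y).trans (mul_le_of_le_one_right ((norm_nonneg _).trans (hK x)) ?_)
    exact abs_le.2 ⟨by linarith [hy.2], by linarith [hy.1]⟩
  rw [intervalIntegral.integral_sub intervalIntegrable_const
    (hc.continuous.intervalIntegrable _ _)] at oscillation
  simpa [one_period] using oscillation

lemma norm_le_HsNorm (hs : 3 / 2 < s) (hu : InHs s u) (x : ℝ) :
    ‖u x‖ ≤ (morreyConst (s - 1) + 1) * HsNorm s u := by
  have mean : ‖∫ y in I01, u y‖ ≤ HsNorm s u :=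
    (pow_le_pow_iff_left₀ (norm_nonneg _) (HsNorm_nonneg s u) two_ne_zero).1
      ((norm_setIntegral_sq_le hu.continuous).trans (setIntegral_norm_sq_le_HsNorm_sq s u))
  have oscillation := norm_sub_integral_le hu.1 hu.2.1 (norm_deriv_le_HsNorm hs hu) x
  linarith [norm_le_insert' (u x) (∫ y in I01, u y)]

end SobolevSpace

section Dilation

lemma setLIntegral_centeredPeriod_comp_mul_le {θ : ℝ} (hθ : θ ∈ Ioo 0 1) (f : ℝ → ℝ≥0∞) :
    ∫⁻ h in centeredPeriod, f (θ * h) ≤ ENNReal.ofReal θ⁻¹ * ∫⁻ h in centeredPeriod, f h := by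
  have dilation := measurableEmbedding_mulLeft₀ hθ.1.ne'
  have subset_preimage : centeredPeriod ⊆ (θ * ·) ⁻¹' centeredPeriod := fun h hh => by
    constructor <;> nlinarith [hθ.1, hθ.2, hh.1, hh.2]
  calc ∫⁻ h in centeredPeriod, f (θ * h)
      ≤ ∫⁻ h in (θ * ·) ⁻¹' centeredPeriod, f (θ * h) := lintegral_mono_set subset_preimage
    _ = ∫⁻ h in centeredPeriod, f h ∂(volume.map (θ * ·)) := by
        rw [dilation.restrict_map, dilation.lintegral_map]
    _ = ENNReal.ofReal θ⁻¹ * ∫⁻ h in centeredPeriod, f h := by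
        rw [Real.map_volume_mul_left hθ.1.ne', Measure.restrict_smul, lintegral_smul_measure,
          abs_of_pos (inv_pos.2 hθ.1), smul_eq_mul]

lemma setLIntegral_dilated_difference_le {E : Type*} [NormedAddCommGroup E] {σ : ℝ} (hσ : 0 ≤ σ)
    (v : ℝ → E) (x : ℝ) {θ : ℝ} (hθ : θ ∈ Ioo 0 1) :
    ∫⁻ h in centeredPeriod, ENNReal.ofReal (‖v (x + θ * h) - v x‖ ^ 2 / |h| ^ (2 * σ + 1)) ≤
      ∫⁻ h in centeredPeriod, ENNReal.ofReal (‖v (x + h) - v x‖ ^ 2 / |h| ^ (2 * σ + 1)) := by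
  have weight_pos : 0 < θ ^ (2 * σ + 1) := rpow_pos_of_pos hθ.1 _
  have homogeneous (h : ℝ) :
      ENNReal.ofReal (‖v (x + θ * h) - v x‖ ^ 2 / |h| ^ (2 * σ + 1)) = ENNReal.ofReal
        (θ ^ (2 * σ + 1)) * ENNReal.ofReal (‖v (x + θ * h) - v x‖ ^ 2 / |θ * h| ^ (2 * σ + 1)) := by
    rw [← ENNReal.ofReal_mul weight_pos.le, abs_mul, abs_of_pos hθ.1,
      mul_rpow hθ.1.le (abs_nonneg h), mul_div_assoc', mul_div_mul_left _ _ weight_pos.ne']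
  simp only [homogeneous]
  rw [lintegral_const_mul' _ _ ENNReal.ofReal_ne_top]
  refine (mul_le_mul_right (setLIntegral_centeredPeriod_comp_mul_le hθ fun h =>
    ENNReal.ofReal (‖v (x + h) - v x‖ ^ 2 / |h| ^ (2 * σ + 1))) _).trans ?_
  rw [← mul_assoc, ← ENNReal.ofReal_mul weight_pos.le]
  refine mul_le_of_le_one_left zero_le (ENNReal.ofReal_le_one.2 ?_)
  rw [← rpow_neg_one, ← rpow_add hθ.1]
  exact rpow_le_one hθ.1.le hθ.2.le (by linarith)

end Dilation

section SegmentMean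

variable {E : Type*} [NormedAddCommGroup E] [NormedSpace ℝ E] {σ : ℝ} {u v : ℝ → E}

/-- The mean of `v` over the segment from `x` to `x + h`. For `v = u'` it is the difference
quotient of `u`, extended continuously to `h = 0`. -/
def segmentMean (v : ℝ → E) (x h : ℝ) : E := ∫ θ in (0 : ℝ)..1, v (x + θ * h)

lemma segmentMean_eq_setIntegral (v : ℝ → E) (x h : ℝ) :
    segmentMean v x h = ∫ θ in I01, v (x + θ * h) := by
  rw [segmentMean, intervalIntegral.integral_of_le zero_le_one, I01, integral_Ico_eq_integral_Ioc]

lemma periodic_segmentMean (hv : Function.Periodic v 1) (h : ℝ) :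
    Function.Periodic (segmentMean v · h) 1 := fun x => by
  simp only [segmentMean, add_right_comm x 1, hv _]

lemma norm_segmentMean_le {K : ℝ} (hK : ∀ x, ‖v x‖ ≤ K) (x h : ℝ) : ‖segmentMean v x h‖ ≤ K := by
  simpa [segmentMean] using intervalIntegral.norm_integral_le_of_norm_le_const (a := 0) (b := 1)
    fun θ _ => hK (x + θ * h)

lemma continuous_segmentMean {X : Type*} [TopologicalSpace X] {F : X → ℝ → E} {x h : X → ℝ}
    (hF : Continuous (Function.uncurry F)) (hx : Continuous x) (hh : Continuous h) :
    Continuous fun p => segmentMean (F p) (x p) (h p) := by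
  unfold segmentMean
  fun_prop

variable [CompleteSpace E]

lemma segmentMean_zero (v : ℝ → E) (x : ℝ) : segmentMean v x 0 = v x := by
  simp [segmentMean]

lemma smul_segmentMean_deriv (hu : ContDiff ℝ 1 u) (x h : ℝ) :
    h • segmentMean (deriv u) x h = u (x + h) - u x := by
  have substitution := intervalIntegral.smul_integral_comp_add_mul (deriv u) (a := 0) (b := 1) h x
  simp only [mul_comm h] at substitution
  rw [segmentMean, substitution, zero_mul, add_zero, one_mul,
    intervalIntegral.integral_deriv_eq_sub (fun y _ => hu.differentiable one_ne_zero y)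
      ((hu.continuous_deriv le_rfl).intervalIntegrable _ _)]

lemma enorm_segmentMean_sub_sq_le (hv : Continuous v) (x h : ℝ) :
    ‖segmentMean v x h - v x‖ₑ ^ 2 ≤ ∫⁻ θ in I01, ‖v (x + θ * h) - v x‖ₑ ^ 2 := by
  have mean_sub : segmentMean v x h - v x = ∫ θ in I01, (v (x + θ * h) - v x) := by
    rw [integral_sub (integrableOn_I01 (by fun_prop)) (integrable_const _), integral_const,
      probReal_univ, one_smul, segmentMean_eq_setIntegral]
  rw [mean_sub]
  exact enorm_integral_sq_le (integrableOn_I01 (by fun_prop)).aestronglyMeasurable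

theorem lintegral_segmentMean_sub_sq_le_gagliardoSqE (hσ : 0 ≤ σ) (hv : Function.Periodic v 1)
    (hc : Continuous v) :
    ∫⁻ x in I01, ∫⁻ h in centeredPeriod,
      ENNReal.ofReal (‖segmentMean v x h - v x‖ ^ 2 / |h| ^ (2 * σ + 1)) ≤ gagliardoSqE σ v := by
  rw [gagliardoSqE_eq_centeredPeriod σ hv]
  refine lintegral_mono fun x => ?_
  have jensen (h : ℝ) : ENNReal.ofReal (‖segmentMean v x h - v x‖ ^ 2 / |h| ^ (2 * σ + 1)) ≤
      ∫⁻ θ in I01, ENNReal.ofReal (‖v (x + θ * h) - v x‖ ^ 2 / |h| ^ (2 * σ + 1)) := by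
    have weight_nonneg : 0 ≤ (|h| ^ (2 * σ + 1))⁻¹ := by positivity
    simp only [div_eq_mul_inv, mul_comm _ (|h| ^ (2 * σ + 1))⁻¹, ENNReal.ofReal_mul weight_nonneg,
      ENNReal.ofReal_pow (norm_nonneg _), ofReal_norm]
    rw [lintegral_const_mul' _ _ ENNReal.ofReal_ne_top]
    exact mul_le_mul_right (enorm_segmentMean_sub_sq_le hc x h) _
  have measurable : Measurable (Function.uncurry fun h θ : ℝ =>
      ENNReal.ofReal (‖v (x + θ * h) - v x‖ ^ 2 / |h| ^ (2 * σ + 1))) := by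
    have numerator : Continuous fun p : ℝ × ℝ => ‖v (x + p.2 * p.1) - v x‖ ^ 2 := by fun_prop
    exact (numerator.measurable.div (by fun_prop)).ennreal_ofReal
  calc _ ≤ ∫⁻ h in centeredPeriod, ∫⁻ θ in I01,
        ENNReal.ofReal (‖v (x + θ * h) - v x‖ ^ 2 / |h| ^ (2 * σ + 1)) := lintegral_mono jensen
    _ = ∫⁻ θ in Ioo (0 : ℝ) 1, ∫⁻ h in centeredPeriod,
        ENNReal.ofReal (‖v (x + θ * h) - v x‖ ^ 2 / |h| ^ (2 * σ + 1)) := by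
        rw [lintegral_lintegral_swap measurable.aemeasurable]
        exact setLIntegral_congr Ioo_ae_eq_Ico.symm
    _ ≤ ∫⁻ _ in Ioo (0 : ℝ) 1, ∫⁻ h in centeredPeriod,
        ENNReal.ofReal (‖v (x + h) - v x‖ ^ 2 / |h| ^ (2 * σ + 1)) :=
        setLIntegral_mono' measurableSet_Ioo fun θ hθ =>
          setLIntegral_dilated_difference_le hσ v x hθ
    _ = _ := by simp

end SegmentMean

section ChordArc

variable {n : ℕ} {s c M N : ℝ} {γ u : ℝ → En n}

/-- The chord-arc bound `c * |h| ≤ ‖γ (x + h) - γ x‖` over a period. Stating it for the difference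
quotient `segmentMean (deriv γ)` includes the limiting case `h = 0`, where it says
`c ≤ ‖deriv γ x‖`. -/
def ChordArc (c : ℝ) (γ : ℝ → En n) : Prop :=
  ∀ x h : ℝ, |h| ≤ 1 / 2 → c ≤ ‖segmentMean (deriv γ) x h‖

lemma ChordArc.le_norm_deriv (hγ : ChordArc c γ) (x : ℝ) : c ≤ ‖deriv γ x‖ := by
  simpa only [segmentMean_zero] using hγ x 0 (by norm_num)

lemma ChordArc.mul_abs_le_norm_sub (hγ : ChordArc c γ) (hd : ContDiff ℝ 1 γ) (x : ℝ) {h : ℝ}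
    (hh : |h| ≤ 1 / 2) : c * |h| ≤ ‖γ (x + h) - γ x‖ := by
  rw [← smul_segmentMean_deriv hd, norm_smul, norm_eq_abs, mul_comm]
  exact mul_le_mul_of_nonneg_left (hγ x h hh) (abs_nonneg h)

lemma exists_abs_le_half_eq_add {E : Type*} (x y : ℝ) :
    ∃ h, |h| ≤ 1 / 2 ∧ ∀ v : ℝ → E, Function.Periodic v 1 → v y = v (x + h) :=
  ⟨y - x - round (y - x), abs_sub_round (y - x), fun v hv => by
    rw [← add_sub_assoc, add_sub_cancel, ← mul_one (round (y - x) : ℝ), hv.sub_int_mul_eq]⟩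

lemma ChordArc.norm_sub_le (hc : 0 < c) (hγ : ChordArc c γ) (hγd : ContDiff ℝ 1 γ)
    (hγp : Function.Periodic γ 1) (hud : ContDiff ℝ 1 u) (hup : Function.Periodic u 1)
    (hN : ∀ x, ‖deriv u x‖ ≤ N) (x y : ℝ) : ‖u y - u x‖ ≤ N / c * ‖γ y - γ x‖ := by
  obtain ⟨h, hh, eq_add⟩ := exists_abs_le_half_eq_add x y
  have N_nonneg : 0 ≤ N := (norm_nonneg _).trans (hN 0)
  rw [eq_add u hup, eq_add γ hγp]
  calc ‖u (x + h) - u x‖ = |h| * ‖segmentMean (deriv u) x h‖ := by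
        rw [← smul_segmentMean_deriv hud, norm_smul, norm_eq_abs]
    _ ≤ |h| * N := by gcongr; exact norm_segmentMean_le hN x h
    _ = N / c * (c * |h|) := by field_simp
    _ ≤ N / c * ‖γ (x + h) - γ x‖ := by gcongr; exact hγ.mul_abs_le_norm_sub hγd x hh

lemma norm_Dg_le (hc : 0 < c) (hγ : ∀ x, c ≤ ‖deriv γ x‖) (hN : ∀ x, ‖deriv u x‖ ≤ N) (x : ℝ) :
    ‖Dg γ u x‖ ≤ N / c := by
  rw [Dg, norm_smul, norm_inv, norm_norm, ← div_eq_inv_mul]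
  exact div_le_div₀ ((norm_nonneg _).trans (hN x)) (hN x) hc (hγ x)

lemma norm_DDg_le (γ u : ℝ → En n) (x : ℝ) (w : En n) :
    ‖DDg γ u x w‖ ≤ ‖deriv u x‖ / ‖deriv γ x‖ * ‖w‖ := by
  rw [DDg, norm_smul, norm_mul, norm_of_nonneg (by positivity)]
  calc _ ≤ (‖deriv γ x‖ ^ 2)⁻¹ * (‖deriv γ x‖ * ‖w‖) * ‖deriv u x‖ := by
        gcongr
        exact norm_inner_le_norm _ _
    _ = _ := by
        obtain h | h := eq_or_ne ‖deriv γ x‖ 0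
        · simp [h]
        · field_simp

lemma sub_DDg_eq_smul (hγ : ContDiff ℝ 1 γ) (hu : ContDiff ℝ 1 u) {x : ℝ} (hx : deriv γ x ≠ 0)
    (h : ℝ) :
    u (x + h) - u x - DDg γ u x (γ (x + h) - γ x) =
      h • (segmentMean (deriv u) x h - deriv u x
        - DDg γ u x (segmentMean (deriv γ) x h - deriv γ x)) := by
  have norm_ne_zero : ‖deriv γ x‖ ^ 2 ≠ 0 := by positivity
  simp only [DDg, ← smul_segmentMean_deriv hγ, ← smul_segmentMean_deriv hu, inner_sub_right,
    real_inner_smul_right, real_inner_self_eq_norm_sq, mul_sub, inv_mul_cancel₀ norm_ne_zero]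
  module

lemma norm_sub_DDg_sq_le (hc : 0 < c) (hγ : ChordArc c γ) (hγd : ContDiff ℝ 1 γ)
    (hud : ContDiff ℝ 1 u) (hN : ∀ x, ‖deriv u x‖ ≤ N) (x h : ℝ) :
    ‖u (x + h) - u x - DDg γ u x (γ (x + h) - γ x)‖ ^ 2 ≤
      |h| ^ 2 * (2 * (1 + (N / c) ^ 2) * (‖segmentMean (deriv u) x h - deriv u x‖ ^ 2 +
        ‖segmentMean (deriv γ) x h - deriv γ x‖ ^ 2)) := by
  have deriv_pos := hc.trans_le (hγ.le_norm_deriv x)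
  rw [sub_DDg_eq_smul hγd hud (norm_pos_iff.1 deriv_pos), norm_smul, mul_pow, norm_eq_abs]
  gcongr
  set a := segmentMean (deriv u) x h - deriv u x
  set b := segmentMean (deriv γ) x h - deriv γ x
  have N_nonneg : 0 ≤ N := (norm_nonneg _).trans (hN x)
  have triangle : ‖a - DDg γ u x b‖ ≤ ‖a‖ + N / c * ‖b‖ := by
    refine (norm_sub_le _ _).trans (add_le_add_right ((norm_DDg_le γ u x b).trans ?_) _)
    gcongr
    exacts [hN x, hγ.le_norm_deriv x]
  calc ‖a - DDg γ u x b‖ ^ 2 ≤ 2 * (‖a‖ ^ 2 + (N / c * ‖b‖) ^ 2) :=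
        (pow_le_pow_left₀ (norm_nonneg _) triangle 2).trans add_sq_le
    _ ≤ 2 * (1 + (N / c) ^ 2) * (‖a‖ ^ 2 + ‖b‖ ^ 2) := by
        nlinarith [mul_nonneg (sq_nonneg (N / c)) (sq_nonneg ‖a‖), sq_nonneg ‖b‖]

lemma muW_nonneg (γ : ℝ → En n) (x y : ℝ) : 0 ≤ muW γ x y := by
  rw [muW]
  positivity

/-- The constant in the comparison of `‖Rop s γ u x y‖² dμ_γ` with squared Taylor remainders of
`u` and `γ`, when `γ` satisfies the chord-arc bound `c`, `‖γ'‖ ≤ M` and `‖u'‖ ≤ N`. -/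
def tangentPointConst (s c M N : ℝ) : ℝ :=
  2 * (1 + (N / c) ^ 2) * (M ^ 2 / c ^ (2 * s + 1))

lemma tangentPointConst_nonneg (hc : 0 ≤ c) : 0 ≤ tangentPointConst s c M N := by
  rw [tangentPointConst]
  positivity

lemma norm_Rop_sq_mul_muW_le (hs : -1 / 2 ≤ s) (hc : 0 < c) (hγ : ChordArc c γ)
    (hγd : ContDiff ℝ 1 γ) (hud : ContDiff ℝ 1 u) (hM : ∀ x, ‖deriv γ x‖ ≤ M)
    (hN : ∀ x, ‖deriv u x‖ ≤ N) (x : ℝ) {h : ℝ} (hh : |h| ≤ 1 / 2) :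
    ‖Rop s γ u x (x + h)‖ ^ 2 * muW γ x (x + h) ≤ tangentPointConst s c M N *
      (‖segmentMean (deriv u) x h - deriv u x‖ ^ 2 / |h| ^ (2 * (s - 1) + 1) +
        ‖segmentMean (deriv γ) x h - deriv γ x‖ ^ 2 / |h| ^ (2 * (s - 1) + 1)) := by
  obtain rfl | h_ne := eq_or_ne h 0
  · simp [muW, segmentMean_zero]
  have h_pos : 0 < |h| := abs_pos.2 h_ne
  have chord := hγ.mul_abs_le_norm_sub hγd x hh
  have chord_pos : 0 < ‖γ (x + h) - γ x‖ := (mul_pos hc h_pos).trans_le chord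
  have weight_eq : |h| ^ (2 * s + 1) = |h| ^ (2 * (s - 1) + 1) * |h| ^ 2 := by
    rw [← rpow_add_natCast h_pos.ne']
    congr 1
    push_cast
    ring
  have M_nonneg : 0 ≤ M := (norm_nonneg _).trans (hM x)
  calc ‖Rop s γ u x (x + h)‖ ^ 2 * muW γ x (x + h)
      = ‖u (x + h) - u x - DDg γ u x (γ (x + h) - γ x)‖ ^ 2 *
          (‖deriv γ x‖ * ‖deriv γ (x + h)‖) / ‖γ (x + h) - γ x‖ ^ (2 * s + 1) := by
        rw [Rop, muW, norm_smul, mul_pow, norm_inv, norm_of_nonneg (by positivity),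
          rpow_add_one chord_pos.ne', mul_comm 2 s, rpow_mul chord_pos.le, rpow_two]
        field_simp
    _ ≤ |h| ^ 2 * (2 * (1 + (N / c) ^ 2) * (‖segmentMean (deriv u) x h - deriv u x‖ ^ 2 +
          ‖segmentMean (deriv γ) x h - deriv γ x‖ ^ 2)) * (M * M) / (c * |h|) ^ (2 * s + 1) := by
        gcongr
        exacts [norm_sub_DDg_sq_le hc hγ hγd hud hN x h, hM x, hM _, by linarith]
    _ = _ := by
        rw [mul_rpow hc.le h_pos.le, weight_eq, tangentPointConst]
        field_simp

end ChordArc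

section MetricBound

variable {n : ℕ} {s c M N : ℝ} {γ u : ℝ → En n}

/-- `‖R^s_γ u‖²_{L²(μ_γ)}`, valued in `[0,∞]`; for `u = γ` it is the tangent-point energy. -/
def RmuSqE (s : ℝ) (γ u : ℝ → En n) : ℝ≥0∞ :=
  ∫⁻ x in I01, ∫⁻ y in I01, ENNReal.ofReal (‖Rop s γ u x y‖ ^ 2 * muW γ x y)

theorem RmuSqE_le (hs : 1 ≤ s) (hc : 0 < c) (hγ : InHs s γ) (hu : InHs s u) (hγc : ChordArc c γ)
    (hM : ∀ x, ‖deriv γ x‖ ≤ M) (hN : ∀ x, ‖deriv u x‖ ≤ N) :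
    RmuSqE s γ u ≤ ENNReal.ofReal (tangentPointConst s c M N) *
      (gagliardoSqE (s - 1) (deriv u) + gagliardoSqE (s - 1) (deriv γ)) := by
  have integrand_periodic (x : ℝ) : Function.Periodic
      (fun y => ENNReal.ofReal (‖Rop s γ u x y‖ ^ 2 * muW γ x y)) 1 := fun y => by
    simp only [Rop, muW, hγ.1 y, hu.1 y, periodic_deriv hγ.1 y]
  have measurable : Measurable (Function.uncurry fun x h => ENNReal.ofReal
      (‖segmentMean (deriv u) x h - deriv u x‖ ^ 2 / |h| ^ (2 * (s - 1) + 1))) := by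
    have hu' := hu.continuous_deriv
    have mean : Continuous fun p : ℝ × ℝ => segmentMean (deriv u) p.1 p.2 :=
      continuous_segmentMean (F := fun _ => deriv u) (by fun_prop) continuous_fst continuous_snd
    have numerator : Continuous fun p : ℝ × ℝ =>
      ‖segmentMean (deriv u) p.1 p.2 - deriv u p.1‖ ^ 2 := by fun_prop
    exact (numerator.measurable.div (by fun_prop)).ennreal_ofReal
  have pointwise (x h : ℝ) (hh : h ∈ centeredPeriod) :=
    ENNReal.ofReal_le_ofReal (norm_Rop_sq_mul_muW_le (by linarith : -1 / 2 ≤ s) hc hγc hγ.2.1 hu.2.1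
      hM hN x (abs_le_of_mem_centeredPeriod hh))
  simp only [ENNReal.ofReal_mul (tangentPointConst_nonneg hc.le)] at pointwise
  calc RmuSqE s γ u
      = ∫⁻ x in I01, ∫⁻ h in centeredPeriod,
          ENNReal.ofReal (‖Rop s γ u x (x + h)‖ ^ 2 * muW γ x (x + h)) :=
        lintegral_congr fun x => setLIntegral_I01_eq_centeredPeriod (integrand_periodic x) x
    _ ≤ _ := lintegral_mono fun x => setLIntegral_mono' measurableSet_centeredPeriod (pointwise x)
    _ ≤ _ := by
        rw [lintegral_lintegral_const_mul ENNReal.ofReal_ne_top]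
        simp only [ENNReal.ofReal_add (div_nonneg (sq_nonneg _) (rpow_nonneg (abs_nonneg _) _))
          (div_nonneg (sq_nonneg _) (rpow_nonneg (abs_nonneg _) _))]
        rw [lintegral_lintegral_add_left measurable]
        gcongr
        · exact lintegral_segmentMean_sub_sq_le_gagliardoSqE (by linarith) (periodic_deriv hu.1)
            hu.continuous_deriv
        · exact lintegral_segmentMean_sub_sq_le_gagliardoSqE (by linarith) (periodic_deriv hγ.1)
            hγ.continuous_deriv

lemma integral_integral_le_toReal_lintegral {α β : Type*} [MeasurableSpace α] [MeasurableSpace β]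
    {μ : Measure α} {ν : Measure β} {f : α → β → ℝ} (hf : ∀ x y, 0 ≤ f x y) {K : ℝ≥0∞}
    (hK : K ≠ ⊤) (h : ∫⁻ x, ∫⁻ y, ENNReal.ofReal (f x y) ∂ν ∂μ ≤ K) :
    ∫ x, ∫ y, f x y ∂ν ∂μ ≤ K.toReal := by
  refine (le_abs_self _).trans ((ENNReal.ofReal_le_iff_le_toReal hK).1 (le_trans ?_ h))
  rw [← norm_eq_abs, ofReal_norm]
  refine (enorm_integral_le_lintegral_enorm _).trans (lintegral_mono fun x => ?_)
  simp only [← enorm_eq_ofReal (hf x _)]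
  exact enorm_integral_le_lintegral_enorm _

lemma B1_nonneg (s : ℝ) (γ u : ℝ → En n) : 0 ≤ B1 s γ u u :=
  integral_nonneg fun x => integral_nonneg fun y =>
    mul_nonneg real_inner_self_nonneg (muW_nonneg γ x y)

lemma B2_nonneg (s : ℝ) (γ u : ℝ → En n) : 0 ≤ B2 s γ u u :=
  integral_nonneg fun x => integral_nonneg fun y =>
    mul_nonneg (mul_nonneg (sq_nonneg _) (div_nonneg real_inner_self_nonneg (sq_nonneg _)))
      (muW_nonneg γ x y)

lemma B3_nonneg (s : ℝ) (γ u : ℝ → En n) : 0 ≤ B3 s γ u u :=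
  integral_nonneg fun x => integral_nonneg fun y =>
    mul_nonneg (mul_nonneg (sq_nonneg _) (add_nonneg real_inner_self_nonneg
      real_inner_self_nonneg)) (muW_nonneg γ x y)

lemma innerL2g_nonneg (γ u : ℝ → En n) : 0 ≤ innerL2g γ u u :=
  integral_nonneg fun _ => mul_nonneg real_inner_self_nonneg (norm_nonneg _)

lemma innerH1g_le_Gmet (hs : 0 ≤ s) (γ u : ℝ → En n) : innerH1g γ u u ≤ Gmet s γ u u := by
  have := mul_nonneg (by linarith : 0 ≤ 2 * s + 1) (B2_nonneg s γ u)
  rw [Gmet]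
  linarith [B1_nonneg s γ u, B3_nonneg s γ u, innerL2g_nonneg γ u]

lemma B1_le (h : RmuSqE s γ u ≠ ⊤) : B1 s γ u u ≤ (RmuSqE s γ u).toReal := by
  simp only [B1, real_inner_self_eq_norm_sq]
  exact integral_integral_le_toReal_lintegral
    (fun x y => mul_nonneg (sq_nonneg _) (muW_nonneg γ x y)) h le_rfl

lemma integral_Rop_sq_mul_le (h : EtpE s γ ≠ ⊤) {K : ℝ} {w : ℝ → ℝ → ℝ} (hw : ∀ x y, 0 ≤ w x y)
    (hK : ∀ x y, w x y ≤ K) :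
    ∫ x in I01, ∫ y in I01, ‖Rop s γ γ x y‖ ^ 2 * w x y * muW γ x y ≤ K * Etp s γ := by
  have K_nonneg : 0 ≤ K := (hw 0 0).trans (hK 0 0)
  have lintegral_le : ∫⁻ x in I01, ∫⁻ y in I01,
      ENNReal.ofReal (‖Rop s γ γ x y‖ ^ 2 * w x y * muW γ x y) ≤ ENNReal.ofReal K * EtpE s γ := by
    rw [EtpE, ← lintegral_lintegral_const_mul ENNReal.ofReal_ne_top]
    refine lintegral_mono fun x => lintegral_mono fun y => ?_
    have energy_nonneg := mul_nonneg (sq_nonneg ‖Rop s γ γ x y‖) (muW_nonneg γ x y)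
    rw [← ENNReal.ofReal_mul K_nonneg, mul_right_comm, mul_comm]
    exact ENNReal.ofReal_le_ofReal (mul_le_mul_of_nonneg_right (hK x y) energy_nonneg)
  have le_toReal := integral_integral_le_toReal_lintegral
    (fun x y => mul_nonneg (mul_nonneg (sq_nonneg _) (hw x y)) (muW_nonneg γ x y))
    (ENNReal.mul_ne_top ENNReal.ofReal_ne_top h) lintegral_le
  rwa [ENNReal.toReal_mul, ENNReal.toReal_ofReal K_nonneg] at le_toReal

lemma B2_le (h : EtpE s γ ≠ ⊤) {K : ℝ} (hK : ∀ x y, ‖u y - u x‖ ≤ K * ‖γ y - γ x‖) :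
    B2 s γ u u ≤ K ^ 2 * Etp s γ := by
  simp only [B2, real_inner_self_eq_norm_sq, ← div_pow]
  refine integral_Rop_sq_mul_le h (fun x y => sq_nonneg _) fun x y => ?_
  rw [div_pow]
  refine div_le_of_le_mul₀ (sq_nonneg _) (sq_nonneg K) ?_
  rw [← mul_pow]
  exact pow_le_pow_left₀ (norm_nonneg _) (hK x y) 2

lemma B3_le (h : EtpE s γ ≠ ⊤) {K : ℝ} (hK : ∀ x, ‖Dg γ u x‖ ≤ K) :
    B3 s γ u u ≤ 2 * K ^ 2 * Etp s γ := by
  simp only [B3, real_inner_self_eq_norm_sq]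
  refine integral_Rop_sq_mul_le h (fun x y => by positivity) fun x y => ?_
  rw [two_mul]
  gcongr
  exacts [hK x, hK y]

lemma integral_inner_self_mul_le {f : ℝ → En n} {K : ℝ} (hK : ∀ x, ‖f x‖ ≤ K)
    (hM : ∀ x, ‖deriv γ x‖ ≤ M) : ∫ x in I01, ⟪f x, f x⟫ * ‖deriv γ x‖ ≤ K ^ 2 * M := by
  simp only [real_inner_self_eq_norm_sq]
  have norm_le (x : ℝ) : ‖‖f x‖ ^ 2 * ‖deriv γ x‖‖ ≤ K ^ 2 * M := by
    rw [norm_of_nonneg (by positivity)]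
    gcongr
    exacts [hK x, hM x]
  have integral_le := norm_integral_le_of_norm_le_const (μ := volume.restrict I01)
    (ae_of_all _ norm_le)
  rw [probReal_univ, mul_one] at integral_le
  exact (le_abs_self _).trans integral_le

theorem exists_forall_Gmet_le (hs : 1 ≤ s) (hc : 0 < c) (M : ℝ) {K : ℝ≥0∞} (hK : K ≠ ⊤) :
    ∃ C, ∀ γ u : ℝ → En n, InHs s γ → InHs s u → ChordArc c γ → (∀ x, ‖deriv γ x‖ ≤ M) →
      (∀ x, ‖u x‖ ≤ M) → (∀ x, ‖deriv u x‖ ≤ M) → gagliardoSqE (s - 1) (deriv γ) ≤ K →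
      gagliardoSqE (s - 1) (deriv u) ≤ K → Gmet s γ u u ≤ C := by
  set Q : ℝ≥0∞ := ENNReal.ofReal (tangentPointConst s c M M) * (K + K)
  have Q_ne_top : Q ≠ ⊤ :=
    ENNReal.mul_ne_top ENNReal.ofReal_ne_top (ENNReal.add_ne_top.2 ⟨hK, hK⟩)
  refine ⟨2 * Q.toReal + (2 * s + 1) * ((M / c) ^ 2 * Q.toReal) + 2 * (M / c) ^ 2 * Q.toReal +
    (M / c) ^ 2 * M + M ^ 2 * M, fun γ u hγ hu hγc hγM huM huM' hγK huK => ?_⟩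
  have R_le {v : ℝ → En n} (hv : InHs s v) (hvM : ∀ x, ‖deriv v x‖ ≤ M)
      (hvK : gagliardoSqE (s - 1) (deriv v) ≤ K) : RmuSqE s γ v ≤ Q :=
    (RmuSqE_le hs hc hγ hv hγc hγM hvM).trans (mul_le_mul_right (add_le_add hvK hγK) _)
  have energy_le : EtpE s γ ≤ Q := R_le hγ hγM hγK
  have energy_ne_top := ne_top_of_le_ne_top Q_ne_top energy_le
  have R_u_le := R_le hu huM' huK
  have Dg_le := norm_Dg_le hc hγc.le_norm_deriv huM'
  have energy_toReal_le : Etp s γ ≤ Q.toReal := ENNReal.toReal_mono Q_ne_top energy_le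
  rw [Gmet]
  gcongr
  · exact (B1_le (ne_top_of_le_ne_top Q_ne_top R_u_le)).trans (ENNReal.toReal_mono Q_ne_top R_u_le)
  · exact (B2_le energy_ne_top (hγc.norm_sub_le hc hγ.2.1 hγ.1 hu.2.1 hu.1 huM')).trans
      (mul_le_mul_of_nonneg_left energy_toReal_le (sq_nonneg _))
  · exact (B3_le energy_ne_top Dg_le).trans
      (mul_le_mul_of_nonneg_left energy_toReal_le (by positivity))
  · exact integral_inner_self_mul_le Dg_le hγM
  · exact integral_inner_self_mul_le huM hγM

end MetricBound

section ContinuousFamily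

variable {T : Type*} [TopologicalSpace T] {n : ℕ} {s : ℝ}

lemma continuous_uncurry_of_tendstoUniformly {X E : Type*} [TopologicalSpace X] [UniformSpace E]
    {F : T → X → E} (hF : ∀ t, Continuous (F t)) (h : ∀ t, TendstoUniformly F (F t) (𝓝 t)) :
    Continuous (Function.uncurry F) := by
  refine continuous_iff_continuousAt.2 fun ⟨t, x⟩ => ?_
  have fst_tendsto : Tendsto Prod.fst (𝓝 (t, x)) (𝓝 t) := continuousAt_fst
  have uniform : TendstoUniformly (fun p : T × X => F p.1) (F t) (𝓝 (t, x)) :=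
    fun U hU => fst_tendsto.eventually (h t U hU)
  exact uniform.tendsto_comp (hF t).continuousAt continuousAt_snd

/-- A continuous family of functions in `H^s`, i.e. a continuous map from `T` to `H^s` with its
norm topology. -/
structure HsContinuous (s : ℝ) (F : T → ℝ → En n) : Prop where
  inHs (t : T) : InHs s (F t)
  tendsto (t : T) : Tendsto (fun τ => HsNorm s fun x => F τ x - F t x) (𝓝 t) (𝓝 0)

namespace HsContinuous

variable {F : T → ℝ → En n}

lemma tendstoUniformly_of_norm_le {E : Type*} [SeminormedAddCommGroup E] {f : T → ℝ → E}
    (hF : HsContinuous s F) {C : ℝ} {t : T}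
    (hC : ∀ τ x, ‖f τ x - f t x‖ ≤ C * HsNorm s fun y => F τ y - F t y) :
    TendstoUniformly f (f t) (𝓝 t) := by
  have bound_tendsto := (hF.tendsto t).const_mul C
  rw [mul_zero] at bound_tendsto
  refine Metric.tendstoUniformly_iff.2 fun ε hε => ?_
  filter_upwards [bound_tendsto.eventually_lt_const hε] with τ hτ x
  rw [dist_comm, dist_eq_norm]
  exact (hC τ x).trans_lt hτ

lemma continuous_uncurry (hs : 3 / 2 < s) (hF : HsContinuous s F) :
    Continuous (Function.uncurry F) :=
  continuous_uncurry_of_tendstoUniformly (fun t => (hF.inHs t).continuous) fun t =>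
    hF.tendstoUniformly_of_norm_le fun τ x => norm_le_HsNorm hs ((hF.inHs τ).sub (hF.inHs t)) x

lemma continuous_uncurry_deriv (hs : 3 / 2 < s) (hF : HsContinuous s F) :
    Continuous (Function.uncurry fun t => deriv (F t)) :=
  continuous_uncurry_of_tendstoUniformly (fun t => (hF.inHs t).continuous_deriv) fun t =>
    hF.tendstoUniformly_of_norm_le fun τ x => by
      simpa only [(hF.inHs τ).deriv_sub (hF.inHs t)] using
        norm_deriv_le_HsNorm hs ((hF.inHs τ).sub (hF.inHs t)) x

lemma eventually_gagliardoSqE_deriv_le (hF : HsContinuous s F) (t : T) :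
    ∀ᶠ τ in 𝓝 t, gagliardoSqE (s - 1) (deriv (F τ)) ≤
      2 * (1 + gagliardoSqE (s - 1) (deriv (F t))) := by
  filter_upwards [(hF.tendsto t).eventually_lt_const one_pos] with τ hτ
  have diff_mem := (hF.inHs τ).sub (hF.inHs t)
  have diff_le : gagliardoSqE (s - 1) (deriv fun x => F τ x - F t x) ≤ 1 := by
    rw [← ENNReal.toReal_le_toReal diff_mem.2.2.ne ENNReal.one_ne_top, ENNReal.toReal_one]
    exact (gagliardoSqE_deriv_le_HsNorm_sq s _).trans (pow_le_one₀ (HsNorm_nonneg s _) hτ.le)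
  have triangle := gagliardoSqE_add_le (s - 1) diff_mem.continuous_deriv (deriv (F t))
  simp only [(hF.inHs τ).deriv_sub (hF.inHs t), sub_add_cancel] at triangle diff_le
  exact triangle.trans (by gcongr)

variable [CompactSpace T]

lemma exists_gagliardoSqE_deriv_le (hF : HsContinuous s F) :
    ∃ K : ℝ≥0∞, K ≠ ⊤ ∧ ∀ t, gagliardoSqE (s - 1) (deriv (F t)) ≤ K := by
  suffices ∃ K : ℝ≥0∞, K ≠ ⊤ ∧ ∀ t ∈ univ, gagliardoSqE (s - 1) (deriv (F t)) ≤ K by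
    simpa only [mem_univ, true_implies] using this
  refine isCompact_univ.induction_on (p := fun S => ∃ K : ℝ≥0∞, K ≠ ⊤ ∧
    ∀ t ∈ S, gagliardoSqE (s - 1) (deriv (F t)) ≤ K) ⟨0, ENNReal.zero_ne_top, by simp⟩ ?_ ?_ ?_
  · exact fun S S' hSS' ⟨K, hK, h⟩ => ⟨K, hK, fun t ht => h t (hSS' ht)⟩
  · rintro S S' ⟨K, hK, h⟩ ⟨K', hK', h'⟩
    exact ⟨max K K', (max_lt hK.lt_top hK'.lt_top).ne, fun t ht => ht.elim
      (fun ht => (h t ht).trans (le_max_left K K')) fun ht => (h' t ht).trans (le_max_right K K')⟩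
  · exact fun t _ => ⟨_, mem_nhdsWithin_of_mem_nhds (hF.eventually_gagliardoSqE_deriv_le t), _,
      ENNReal.mul_ne_top ENNReal.ofNat_ne_top
        (ENNReal.add_ne_top.2 ⟨ENNReal.one_ne_top, (hF.inHs t).2.2.ne⟩), fun _ => id⟩

end HsContinuous

lemma exists_forall_norm_le_of_periodic [CompactSpace T] {E : Type*} [SeminormedAddCommGroup E]
    {F : T → ℝ → E} (hF : Continuous (Function.uncurry F)) (hp : ∀ t, Function.Periodic (F t) 1) :
    ∃ M, ∀ t x, ‖F t x‖ ≤ M := by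
  obtain ⟨M, hM⟩ := (isCompact_univ.prod isCompact_Icc).exists_bound_of_continuousOn
    (s := (univ : Set T) ×ˢ Icc (0 : ℝ) 1) hF.continuousOn
  refine ⟨M, fun t x => ?_⟩
  obtain ⟨y, hy, eq_y⟩ := (hp t).exists_mem_Ico₀ one_pos x
  rw [eq_y]
  exact hM (t, y) ⟨mem_univ t, Ico_subset_Icc_self hy⟩

lemma InM.eq_zero_of_apply_add_eq {γ : ℝ → En n} (hγ : InM s γ) {x h : ℝ} (hh : |h| ≤ 1 / 2)
    (heq : γ (x + h) = γ x) : h = 0 := by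
  have fract_mem (y : ℝ) : Int.fract y ∈ I01 := ⟨Int.fract_nonneg y, Int.fract_lt_one y⟩
  have apply_fract (y : ℝ) : γ (Int.fract y) = γ y := by
    rw [Int.fract, ← mul_one (⌊y⌋ : ℝ), hγ.1.1.sub_int_mul_eq]
  have fract_eq : Int.fract (x + h) = Int.fract x :=
    hγ.2.1 (fract_mem _) (fract_mem _) (by rw [apply_fract, apply_fract, heq])
  obtain ⟨k, hk⟩ := Int.fract_eq_fract.1 fract_eq
  rw [add_sub_cancel_left] at hk
  have k_lt_one : |k| < 1 := by
    have : |(k : ℝ)| < 1 := hk ▸ hh.trans_lt (by norm_num)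
    exact_mod_cast this
  rw [hk, Int.abs_lt_one_iff.1 k_lt_one, Int.cast_zero]

lemma InM.segmentMean_deriv_ne_zero {γ : ℝ → En n} (hγ : InM s γ) (x : ℝ) {h : ℝ}
    (hh : |h| ≤ 1 / 2) : segmentMean (deriv γ) x h ≠ 0 := fun mean_eq_zero => by
  have h_eq_zero : h = 0 := hγ.eq_zero_of_apply_add_eq hh (x := x) (by
    rw [← sub_eq_zero, ← smul_segmentMean_deriv hγ.1.2.1, mean_eq_zero, smul_zero])
  exact hγ.2.2 x (by rw [← segmentMean_zero (deriv γ) x, ← h_eq_zero, mean_eq_zero])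

lemma exists_forall_chordArc [CompactSpace T] {Γ : T → ℝ → En n} (hΓ : ∀ t, InM s (Γ t))
    (hd : Continuous (Function.uncurry fun t => deriv (Γ t))) :
    ∃ c > 0, ∀ t, ChordArc c (Γ t) := by
  have mean_continuous : Continuous fun p : T × ℝ × ℝ =>
      ‖segmentMean (deriv (Γ p.1)) p.2.1 p.2.2‖ :=
    (continuous_segmentMean (F := fun p : T × ℝ × ℝ => deriv (Γ p.1))
      (hd.comp (by fun_prop : Continuous fun q : (T × ℝ × ℝ) × ℝ => (q.1.1, q.2)))
      (by fun_prop) (by fun_prop)).norm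
  obtain ⟨c, c_pos, hc⟩ := (isCompact_univ.prod
    (isCompact_Icc.prod isCompact_Icc)).exists_forall_le'
    (s := (univ : Set T) ×ˢ Icc (0 : ℝ) 1 ×ˢ Icc (-(1 / 2) : ℝ) (1 / 2))
    mean_continuous.continuousOn
    fun p hp => norm_pos_iff.2 ((hΓ p.1).segmentMean_deriv_ne_zero p.2.1 (abs_le.2 hp.2.2))
  refine ⟨c, c_pos, fun t x h hh => ?_⟩
  obtain ⟨y, hy, eq_y⟩ :=
    (periodic_segmentMean (periodic_deriv (hΓ t).1.1) h).exists_mem_Ico₀ one_pos x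
  rw [eq_y]
  exact hc (t, y, h) ⟨mem_univ t, Ico_subset_Icc_self hy, abs_le.1 hh⟩

theorem HsContinuous.exists_Gmet_le [CompactSpace T] (hs : 3 / 2 < s) {Γ V : T → ℝ → En n}
    (hΓ : HsContinuous s Γ) (hV : HsContinuous s V) (hM : ∀ t, InM s (Γ t)) :
    ∃ C, ∀ t, Gmet s (Γ t) (V t) (V t) ≤ C := by
  obtain ⟨c, c_pos, chordArc⟩ := exists_forall_chordArc hM (hΓ.continuous_uncurry_deriv hs)
  obtain ⟨M₁, hM₁⟩ := exists_forall_norm_le_of_periodic (hΓ.continuous_uncurry_deriv hs)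
    fun t => periodic_deriv (hΓ.inHs t).1
  obtain ⟨M₂, hM₂⟩ := exists_forall_norm_le_of_periodic (hV.continuous_uncurry hs)
    fun t => (hV.inHs t).1
  obtain ⟨M₃, hM₃⟩ := exists_forall_norm_le_of_periodic (hV.continuous_uncurry_deriv hs)
    fun t => periodic_deriv (hV.inHs t).1
  obtain ⟨K₁, hK₁, gagliardo_Γ⟩ := hΓ.exists_gagliardoSqE_deriv_le
  obtain ⟨K₂, hK₂, gagliardo_V⟩ := hV.exists_gagliardoSqE_deriv_le
  obtain ⟨C, hC⟩ := exists_forall_Gmet_le (n := n) (by linarith : 1 ≤ s) c_pos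
    (max M₁ (max M₂ M₃)) (max_lt hK₁.lt_top hK₂.lt_top).ne
  exact ⟨C, fun t => hC (Γ t) (V t) (hΓ.inHs t) (hV.inHs t) (chordArc t)
    (fun x => (hM₁ t x).trans (by simp)) (fun x => (hM₂ t x).trans (by simp))
    (fun x => (hM₃ t x).trans (by simp)) ((gagliardo_Γ t).trans (by simp))
    ((gagliardo_V t).trans (by simp))⟩

end ContinuousFamily

section Paths

variable {n : ℕ} {s : ℝ} {F F' : ℝ → ℝ → En n} {S : Set ℝ} {t : ℝ}

lemma HsNorm_zero : HsNorm s (fun _ => (0 : En n)) = 0 := by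
  have zero_mem : InHs s (fun _ => (0 : En n)) := by
    refine ⟨fun _ => rfl, contDiff_const, ?_⟩
    simp [gagliardoSqE]
  simpa only [smul_zero, abs_zero, zero_mul] using HsNorm_const_smul 0 zero_mem

namespace IsHsDerivOn

lemma tendsto_slope (hF : IsHsDerivOn s F F' S) (ht : t ∈ S) :
    Tendsto (fun τ => HsNorm s fun x => (τ - t)⁻¹ • (F τ x - F t x) - F' t x)
      (𝓝[S \ {t}] t) (𝓝 0) := by
  have increment_tendsto :
      Tendsto (fun τ => τ - t) (𝓝[S \ {t}] t) (𝓝[{h | t + h ∈ S ∧ h ≠ 0}] 0) := by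
    refine tendsto_nhdsWithin_iff.2 ⟨?_, ?_⟩
    · exact tendsto_nhdsWithin_of_tendsto_nhds
        (by simpa only [sub_self] using (continuous_sub_right t).tendsto t)
    · filter_upwards [self_mem_nhdsWithin] with τ hτ
      exact ⟨by rw [add_sub_cancel]; exact hτ.1, sub_ne_zero.2 hτ.2⟩
  simpa only [Function.comp_def, add_sub_cancel] using (hF t ht).comp increment_tendsto

lemma hasDerivWithinAt_deriv (hs : 3 / 2 < s) (hF : IsHsDerivOn s F F' S)
    (hFS : ∀ τ ∈ S, InHs s (F τ)) (ht : t ∈ S) (hF't : InHs s (F' t)) (x : ℝ) :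
    HasDerivWithinAt (fun τ => deriv (F τ) x) (deriv (F' t) x) S t := by
  have bound_tendsto := (hF.tendsto_slope ht).const_mul (morreyConst (s - 1))
  rw [mul_zero] at bound_tendsto
  refine hasDerivWithinAt_iff_tendsto_slope.2 (tendsto_iff_norm_sub_tendsto_zero.2 ?_)
  refine squeeze_zero' (Eventually.of_forall fun _ => norm_nonneg _) ?_ bound_tendsto
  filter_upwards [self_mem_nhdsWithin] with τ hτ
  have diff_mem := (hFS τ hτ.1).sub (hFS t ht)
  have quotient_mem := diff_mem.const_smul (τ - t)⁻¹
  have morrey := norm_deriv_le_HsNorm hs (quotient_mem.sub hF't) x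
  rwa [quotient_mem.deriv_sub hF't, diff_mem.deriv_const_smul,
    (hFS τ hτ.1).deriv_sub (hFS t ht)] at morrey

lemma hsContOn (hF : IsHsDerivOn s F F' S) (hFS : ∀ t ∈ S, InHs s (F t))
    (hF'S : ∀ t ∈ S, InHs s (F' t)) : HsContOn s F S := fun t ht => by
  have self_eq_zero : HsNorm s (fun x => F t x - F t x) = 0 := by
    simp only [sub_self, HsNorm_zero]
  suffices ContinuousWithinAt (fun τ => HsNorm s fun x => F τ x - F t x) (S \ {t}) t by
    simpa only [ContinuousWithinAt, self_eq_zero] using continuousWithinAt_sdiff_self.1 this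
  rw [ContinuousWithinAt, self_eq_zero]
  have increment_tendsto : Tendsto (fun τ => |τ - t|) (𝓝[S \ {t}] t) (𝓝 0) :=
    tendsto_nhdsWithin_of_tendsto_nhds (Continuous.tendsto' (by fun_prop) t 0 (by simp))
  have bound_tendsto := increment_tendsto.mul
    (((hF.tendsto_slope ht).add_const (HsNorm s (F' t))).const_mul (√2))
  rw [zero_mul] at bound_tendsto
  refine squeeze_zero' (Eventually.of_forall fun _ => HsNorm_nonneg s _) ?_ bound_tendsto
  filter_upwards [self_mem_nhdsWithin] with τ hτ
  have quotient_mem := ((hFS τ hτ.1).sub (hFS t ht)).const_smul (τ - t)⁻¹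
  have remainder_mem := quotient_mem.sub (hF'S t ht)
  have eq_smul : (fun x => F τ x - F t x) = fun x =>
      (τ - t) • ((τ - t)⁻¹ • (F τ x - F t x) - F' t x + F' t x) := by
    simp only [sub_add_cancel, smul_inv_smul₀ (sub_ne_zero.2 hτ.2)]
  rw [eq_smul, HsNorm_const_smul _ (remainder_mem.add (hF'S t ht))]
  exact mul_le_mul_of_nonneg_left (HsNorm_add_le remainder_mem (hF'S t ht)) (abs_nonneg _)

end IsHsDerivOn

lemma HsContOn.hsContinuous_restrict (hF : HsContOn s F S) (hFS : ∀ t ∈ S, InHs s (F t)) :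
    HsContinuous s fun t : S => F t where
  inHs t := hFS t t.2
  tendsto t := tendsto_nhdsWithin_iff_subtype t.2 _ _ |>.1 (hF t t.2)

namespace C1Path

variable (P : C1Path s n)

lemma inHs (ht : t ∈ Icc (0 : ℝ) 1) : InHs s (P.Γ t) := (P.mem t ht).1

lemma isHsDerivOn : IsHsDerivOn s P.Γ P.V (Icc 0 1) := P.isDeriv

lemma hsContinuous_Γ : HsContinuous s fun t : Icc (0 : ℝ) 1 => P.Γ t :=
  (P.isHsDerivOn.hsContOn (fun _ => P.inHs) P.memV).hsContinuous_restrict fun _ => P.inHs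

lemma hsContinuous_V : HsContinuous s fun t : Icc (0 : ℝ) 1 => P.V t :=
  HsContOn.hsContinuous_restrict P.contV P.memV

end C1Path

end Paths

section MetricMeasurability

variable {T : Type*} [MeasurableSpace T] {n : ℕ}

lemma measurable_setIntegral_I01 {f : T → ℝ → ℝ} (hf : Measurable (Function.uncurry f)) :
    Measurable fun t => ∫ x in I01, f t x :=
  (hf.stronglyMeasurable.integral_prod_right (ν := volume.restrict I01)).measurable

lemma measurable_setIntegral_setIntegral_I01 {f : T → ℝ → ℝ → ℝ}
    (hf : Measurable fun p : (T × ℝ) × ℝ => f p.1.1 p.1.2 p.2) :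
    Measurable fun t => ∫ x in I01, ∫ y in I01, f t x y :=
  measurable_setIntegral_I01 (measurable_setIntegral_I01 (f := fun p : T × ℝ => f p.1 p.2) hf)

section

variable {E : Type*} [MeasurableSpace E] {f : T → ℝ → E}

lemma measurable_apply_fst (hf : Measurable (Function.uncurry f)) :
    Measurable fun p : (T × ℝ) × ℝ => f p.1.1 p.1.2 := hf.comp measurable_fst

lemma measurable_apply_snd (hf : Measurable (Function.uncurry f)) :
    Measurable fun p : (T × ℝ) × ℝ => f p.1.1 p.2 :=
  hf.comp (measurable_fst.fst.prodMk measurable_snd)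

end

variable {Γ U : T → ℝ → En n}

lemma measurable_muW (hΓ : Measurable (Function.uncurry Γ))
    (hΓ' : Measurable (Function.uncurry fun t => deriv (Γ t))) :
    Measurable fun p : (T × ℝ) × ℝ => muW (Γ p.1.1) p.1.2 p.2 :=
  ((measurable_apply_fst hΓ').norm.mul (measurable_apply_snd hΓ').norm).div
    ((measurable_apply_snd hΓ).sub (measurable_apply_fst hΓ)).norm

lemma measurable_Dg (hΓ' : Measurable (Function.uncurry fun t => deriv (Γ t)))
    (hU' : Measurable (Function.uncurry fun t => deriv (U t))) :
    Measurable (Function.uncurry fun t => Dg (Γ t) (U t)) :=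
  hΓ'.norm.inv.smul hU'

lemma measurable_Rop (s : ℝ) (hΓ : Measurable (Function.uncurry Γ))
    (hΓ' : Measurable (Function.uncurry fun t => deriv (Γ t)))
    (hU : Measurable (Function.uncurry U))
    (hU' : Measurable (Function.uncurry fun t => deriv (U t))) :
    Measurable fun p : (T × ℝ) × ℝ => Rop s (Γ p.1.1) (U p.1.1) p.1.2 p.2 := by
  have chord := (measurable_apply_snd hΓ).sub (measurable_apply_fst hΓ)
  have increment := (measurable_apply_snd hU).sub (measurable_apply_fst hU)
  have Γ'x := measurable_apply_fst hΓ'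
  have U'x := measurable_apply_fst hU'
  exact (chord.norm.pow_const s).inv.smul
    (increment.sub (((Γ'x.norm.pow_const 2).inv.mul (Γ'x.inner chord)).smul U'x))

lemma measurable_Gmet (s : ℝ) (hΓ : Measurable (Function.uncurry Γ))
    (hΓ' : Measurable (Function.uncurry fun t => deriv (Γ t)))
    (hU : Measurable (Function.uncurry U))
    (hU' : Measurable (Function.uncurry fun t => deriv (U t))) :
    Measurable fun t => Gmet s (Γ t) (U t) (U t) := by
  have chord := (measurable_apply_snd hΓ).sub (measurable_apply_fst hΓ)
  have increment := (measurable_apply_snd hU).sub (measurable_apply_fst hU)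
  have hDg := measurable_Dg hΓ' hU'
  have Dgx := measurable_apply_fst hDg
  have Dgy := measurable_apply_snd hDg
  have hmuW := measurable_muW hΓ hΓ'
  have hRopU := measurable_Rop s hΓ hΓ' hU hU'
  have hRopΓ := (measurable_Rop s hΓ hΓ' hΓ hΓ').norm.pow_const 2
  have hB1 : Measurable fun t => B1 s (Γ t) (U t) (U t) :=
    measurable_setIntegral_setIntegral_I01 ((hRopU.inner hRopU).mul hmuW)
  have hB2 : Measurable fun t => B2 s (Γ t) (U t) (U t) :=
    measurable_setIntegral_setIntegral_I01
      ((hRopΓ.mul ((increment.inner increment).div (chord.norm.pow_const 2))).mul hmuW)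
  have hB3 : Measurable fun t => B3 s (Γ t) (U t) (U t) :=
    measurable_setIntegral_setIntegral_I01
      ((hRopΓ.mul ((Dgx.inner Dgx).add (Dgy.inner Dgy))).mul hmuW)
  have hH1 : Measurable fun t => innerH1g (Γ t) (U t) (U t) :=
    measurable_setIntegral_I01 ((hDg.inner hDg).mul hΓ'.norm)
  have hL2 : Measurable fun t => innerL2g (Γ t) (U t) (U t) :=
    measurable_setIntegral_I01 ((hU.inner hU).mul hΓ'.norm)
  exact ((((hB1.const_mul 2).add (hB2.const_mul (2 * s + 1))).add hB3).add hH1).add hL2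

theorem C1Path.integrableOn_sqrt_Gmet {s : ℝ} (hs : 3 / 2 < s) (P : C1Path s n) :
    IntegrableOn (fun t => √(Gmet s (P.Γ t) (P.V t) (P.V t))) (Icc 0 1) := by
  have hΓ := P.hsContinuous_Γ
  have hV := P.hsContinuous_V
  obtain ⟨C, hC⟩ := hΓ.exists_Gmet_le hs hV fun t => P.mem t t.2
  have metric_measurable := measurable_Gmet s (hΓ.continuous_uncurry hs).measurable
    (hΓ.continuous_uncurry_deriv hs).measurable (hV.continuous_uncurry hs).measurable
    (hV.continuous_uncurry_deriv hs).measurable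
  rw [integrableOn_iff_comap_subtypeVal measurableSet_Icc]
  refine Integrable.of_bound (μ := (volume : Measure unitInterval))
    metric_measurable.sqrt.aestronglyMeasurable (√C) (ae_of_all _ fun t => ?_)
  exact (norm_of_nonneg (sqrt_nonneg _)).trans_le (sqrt_le_sqrt (hC t))

end MetricMeasurability

section ArcLength

lemma abs_integral_inner_mul_le {α E : Type*} [MeasurableSpace α] {μ : Measure α}
    [NormedAddCommGroup E] [InnerProductSpace ℝ E] {f g : α → E} {w : α → ℝ} (hw : ∀ x, 0 ≤ w x)
    (hff : Integrable (fun x => ⟪f x, f x⟫ * w x) μ)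
    (hfg : Integrable (fun x => ⟪f x, g x⟫ * w x) μ)
    (hgg : Integrable (fun x => ⟪g x, g x⟫ * w x) μ) :
    |∫ x, ⟪f x, g x⟫ * w x ∂μ| ≤
      √(∫ x, ⟪f x, f x⟫ * w x ∂μ) * √(∫ x, ⟪g x, g x⟫ * w x ∂μ) := by
  have discrim_nonpos := discrim_le_zero fun a : ℝ => show
      0 ≤ (∫ x, ⟪f x, f x⟫ * w x ∂μ) * (a * a) + (2 * ∫ x, ⟪f x, g x⟫ * w x ∂μ) * a +
        ∫ x, ⟪g x, g x⟫ * w x ∂μ by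
    calc 0 ≤ ∫ x, ⟪a • f x + g x, a • f x + g x⟫ * w x ∂μ :=
          integral_nonneg fun x => mul_nonneg real_inner_self_nonneg (hw x)
      _ = ∫ x, (a * a) * (⟪f x, f x⟫ * w x) + (2 * a) * (⟪f x, g x⟫ * w x) +
          ⟪g x, g x⟫ * w x ∂μ := by
        congr with x
        rw [real_inner_add_add_self, real_inner_smul_left, real_inner_smul_left,
          real_inner_smul_right]
        ring
      _ = _ := by
        have higher_terms : Integrable (fun x =>
            (a * a) * (⟪f x, f x⟫ * w x) + (2 * a) * (⟪f x, g x⟫ * w x)) μ :=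
          (hff.const_mul _).add (hfg.const_mul _)
        rw [integral_add higher_terms hgg, integral_add (hff.const_mul _) (hfg.const_mul _),
          integral_const_mul, integral_const_mul]
        ring
  rw [← sqrt_mul (integral_nonneg fun x => mul_nonneg real_inner_self_nonneg (hw x))]
  exact abs_le_sqrt (by rw [discrim] at discrim_nonpos; linarith)

lemma abs_sub_le_integral_of_abs_hasDerivAt_le {f f' φ : ℝ → ℝ} {a b : ℝ} (hab : a ≤ b)
    (hf : ContinuousOn f (Icc a b)) (hf' : ∀ t ∈ Ioo a b, HasDerivAt f (f' t) t)
    (hφ : IntegrableOn φ (Icc a b)) (hle : ∀ t ∈ Ioo a b, |f' t| ≤ φ t) :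
    |f b - f a| ≤ ∫ t in a..b, φ t := by
  have hf'_right (t : ℝ) (ht : t ∈ Ioo a b) := (hf' t ht).hasDerivWithinAt (s := Ioi t)
  refine abs_le.2 ⟨?_, ?_⟩
  · rw [← intervalIntegral.integral_neg]
    exact intervalIntegral.integral_le_sub_of_hasDeriv_right_of_le hab hf hf'_right hφ.neg
      fun t ht => (abs_le.1 (hle t ht)).1
  · exact intervalIntegral.sub_le_integral_of_hasDeriv_right_of_le hab hf hf'_right hφ
      fun t ht => (abs_le.1 (hle t ht)).2

lemma hasDerivAt_norm_comp {E : Type*} [NormedAddCommGroup E] [InnerProductSpace ℝ E] {f : ℝ → E}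
    {f' : E} {t : ℝ} (hf : HasDerivAt f f' t) (h0 : f t ≠ 0) :
    HasDerivAt (fun τ => ‖f τ‖) (⟪f t, f'⟫ / ‖f t‖) t := by
  have sqrt_deriv := hf.norm_sq.sqrt (pow_ne_zero 2 (norm_ne_zero_iff.2 h0))
  simp only [sqrt_sq (norm_nonneg _)] at sqrt_deriv
  rwa [mul_div_mul_left _ _ two_ne_zero] at sqrt_deriv

variable {n : ℕ} {s : ℝ} {γ u v : ℝ → En n}

lemma InM.arcLen_pos (hγ : InM s γ) : 0 < arcLen γ := by
  have support_eq : (Function.support fun x => ‖deriv γ x‖) = univ :=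
    eq_univ_of_forall fun x => norm_ne_zero_iff.2 (hγ.2.2 x)
  rw [arcLen, integral_pos_iff_support_of_nonneg (fun x => norm_nonneg _)
    (integrableOn_I01 hγ.1.continuous_deriv.norm), support_eq, measure_univ]
  exact one_pos

lemma inner_Dg_self_mul_norm_deriv (γ v : ℝ → En n) (x : ℝ) :
    ⟪Dg γ γ x, Dg γ v x⟫ * ‖deriv γ x‖ = ⟪deriv γ x, deriv v x⟫ / ‖deriv γ x‖ := by
  rw [Dg, Dg, real_inner_smul_left, real_inner_smul_right]
  rcases eq_or_ne ‖deriv γ x‖ 0 with norm_eq_zero | norm_ne_zero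
  · simp only [norm_eq_zero, mul_zero, div_zero]
  · field_simp

lemma innerH1g_self_self (γ : ℝ → En n) : innerH1g γ γ γ = arcLen γ := by
  simp only [innerH1g, arcLen, inner_Dg_self_mul_norm_deriv]
  simp only [real_inner_self_eq_norm_mul_norm, mul_self_div_self]

lemma InM.continuous_Dg (hγ : InM s γ) (hu : Continuous (deriv u)) : Continuous (Dg γ u) :=
  (hγ.1.continuous_deriv.norm.inv₀ fun x => norm_ne_zero_iff.2 (hγ.2.2 x)).smul hu

lemma InM.abs_innerH1g_le (hγ : InM s γ) (hu : Continuous (deriv u)) (hv : Continuous (deriv v)) :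
    |innerH1g γ u v| ≤ √(innerH1g γ u u) * √(innerH1g γ v v) := by
  have Dg_u := hγ.continuous_Dg hu
  have Dg_v := hγ.continuous_Dg hv
  have speed := hγ.1.continuous_deriv.norm
  exact abs_integral_inner_mul_le (fun x => norm_nonneg _)
    (integrableOn_I01 ((Dg_u.inner Dg_u).mul speed))
    (integrableOn_I01 ((Dg_u.inner Dg_v).mul speed))
    (integrableOn_I01 ((Dg_v.inner Dg_v).mul speed))

lemma InM.abs_innerH1g_self_le (hs : 0 ≤ s) (hγ : InM s γ) (hv : Continuous (deriv v)) :
    |innerH1g γ γ v| ≤ √(arcLen γ) * √(Gmet s γ v v) :=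
  calc |innerH1g γ γ v| ≤ √(innerH1g γ γ γ) * √(innerH1g γ v v) :=
        hγ.abs_innerH1g_le hγ.1.continuous_deriv hv
    _ ≤ √(arcLen γ) * √(Gmet s γ v v) := by
        rw [innerH1g_self_self]
        gcongr
        exact innerH1g_le_Gmet hs γ v

lemma HsContinuous.continuous_arcLen {T : Type*} [TopologicalSpace T] [CompactSpace T]
    [FirstCountableTopology T] {F : T → ℝ → En n} (hs : 3 / 2 < s) (hF : HsContinuous s F) :
    Continuous fun t => arcLen (F t) := by
  have deriv_continuous := hF.continuous_uncurry_deriv hs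
  obtain ⟨M, hM⟩ := exists_forall_norm_le_of_periodic deriv_continuous
    fun t => periodic_deriv (hF.inHs t).1
  exact continuous_of_dominated (bound := fun _ => M)
    (fun t => (hF.inHs t).continuous_deriv.norm.aestronglyMeasurable)
    (fun t => ae_of_all _ fun x => (norm_norm _).trans_le (hM t x)) (integrable_const M)
    (ae_of_all _ fun x => (deriv_continuous.comp (Continuous.prodMk_left x)).norm)

namespace C1Path

variable (P : C1Path s n) {t : ℝ}

lemma hasDerivAt_norm_deriv (hs : 3 / 2 < s) (ht : t ∈ Ioo (0 : ℝ) 1) (x : ℝ) :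
    HasDerivAt (fun τ => ‖deriv (P.Γ τ) x‖)
      (⟪Dg (P.Γ t) (P.Γ t) x, Dg (P.Γ t) (P.V t) x⟫ * ‖deriv (P.Γ t) x‖) t := by
  have ht' := Ioo_subset_Icc_self ht
  rw [inner_Dg_self_mul_norm_deriv]
  refine hasDerivAt_norm_comp ?_ ((P.mem t ht').2.2 x)
  exact (P.isHsDerivOn.hasDerivWithinAt_deriv hs (fun _ => P.inHs) ht' (P.memV t ht') x).hasDerivAt
    (Icc_mem_nhds ht.1 ht.2)

lemma exists_norm_deriv_V_le (hs : 3 / 2 < s) :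
    ∃ M, ∀ t ∈ Icc (0 : ℝ) 1, ∀ x, ‖deriv (P.V t) x‖ ≤ M := by
  obtain ⟨M, hM⟩ := exists_forall_norm_le_of_periodic (P.hsContinuous_V.continuous_uncurry_deriv hs)
    fun t => periodic_deriv (P.memV t t.2).1
  exact ⟨M, fun t ht => hM ⟨t, ht⟩⟩

lemma hasDerivAt_arcLen (hs : 3 / 2 < s) (ht : t ∈ Ioo (0 : ℝ) 1) :
    HasDerivAt (fun τ => arcLen (P.Γ τ)) (innerH1g (P.Γ t) (P.Γ t) (P.V t)) t := by
  obtain ⟨M, hM⟩ := P.exists_norm_deriv_V_le hs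
  have mem_Icc {τ : ℝ} (hτ : τ ∈ Ioo (0 : ℝ) 1) : τ ∈ Icc (0 : ℝ) 1 := Ioo_subset_Icc_self hτ
  have speed_continuous {τ : ℝ} (hτ : τ ∈ Ioo (0 : ℝ) 1) : Continuous fun x => ‖deriv (P.Γ τ) x‖ :=
    (P.inHs (mem_Icc hτ)).continuous_deriv.norm
  have derivative_continuous : Continuous fun x =>
      ⟪Dg (P.Γ t) (P.Γ t) x, Dg (P.Γ t) (P.V t) x⟫ * ‖deriv (P.Γ t) x‖ :=
    (((P.mem t (mem_Icc ht)).continuous_Dg (P.inHs (mem_Icc ht)).continuous_deriv).inner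
      ((P.mem t (mem_Icc ht)).continuous_Dg (P.memV t (mem_Icc ht)).continuous_deriv)).mul
      (speed_continuous ht)
  have derivative_le (x τ : ℝ) (hτ : τ ∈ Ioo (0 : ℝ) 1) :
      ‖⟪Dg (P.Γ τ) (P.Γ τ) x, Dg (P.Γ τ) (P.V τ) x⟫ * ‖deriv (P.Γ τ) x‖‖ ≤ M := by
    rw [inner_Dg_self_mul_norm_deriv, norm_div, norm_norm]
    exact (div_le_of_le_mul₀ (norm_nonneg _) (norm_nonneg _)
      ((norm_inner_le_norm _ _).trans_eq (mul_comm _ _))).trans (hM τ (mem_Icc hτ) x)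
  exact (hasDerivAt_integral_of_dominated_loc_of_deriv_le (μ := volume.restrict I01)
    (bound := fun _ => M) (Ioo_mem_nhds ht.1 ht.2)
    (eventually_of_mem (Ioo_mem_nhds ht.1 ht.2) fun τ hτ =>
      (speed_continuous hτ).aestronglyMeasurable)
    (integrableOn_I01 (speed_continuous ht)) derivative_continuous.aestronglyMeasurable
    (ae_of_all _ derivative_le) (integrable_const M)
    (ae_of_all _ fun x τ hτ => P.hasDerivAt_norm_deriv hs hτ x)).2

lemma continuousOn_arcLen (hs : 3 / 2 < s) :
    ContinuousOn (fun t => arcLen (P.Γ t)) (Icc 0 1) :=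
  continuousOn_iff_continuous_domRestrict.2 (P.hsContinuous_Γ.continuous_arcLen hs)

theorem abs_sqrt_arcLen_sub_le_pathLen (hs : 3 / 2 < s) :
    |√(arcLen (P.Γ 1)) - √(arcLen (P.Γ 0))| ≤ 1 / 2 * pathLen P := by
  rw [pathLen, ← intervalIntegral.integral_const_mul]
  refine abs_sub_le_integral_of_abs_hasDerivAt_le (f := fun t => √(arcLen (P.Γ t)))
    (f' := fun t => innerH1g (P.Γ t) (P.Γ t) (P.V t) / (2 * √(arcLen (P.Γ t)))) zero_le_one
    (P.continuousOn_arcLen hs).sqrt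
    (fun t ht => (P.hasDerivAt_arcLen hs ht).sqrt
      (P.mem t (Ioo_subset_Icc_self ht)).arcLen_pos.ne')
    ((P.integrableOn_sqrt_Gmet hs).const_mul _) fun t ht => ?_
  have ht' := Ioo_subset_Icc_self ht
  have sqrt_pos : 0 < √(arcLen (P.Γ t)) := sqrt_pos.2 (P.mem t ht').arcLen_pos
  have cauchy_schwarz := (P.mem t ht').abs_innerH1g_self_le (by linarith)
    (P.memV t ht').continuous_deriv
  rw [abs_div, abs_of_pos (by positivity : 0 < 2 * √(arcLen (P.Γ t))), div_le_iff₀ (by positivity)]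
  linarith

end C1Path

theorem ofReal_abs_sqrt_arcLen_sub_le_geodDist (hs : 3 / 2 < s) (γ₀ γ₁ : ℝ → En n) :
    ENNReal.ofReal |√(arcLen γ₁) - √(arcLen γ₀)| ≤
      ENNReal.ofReal (1 / 2) * geodDist s γ₁ γ₀ := by
  simp only [geodDist, ENNReal.mul_iInf_of_ne (ENNReal.ofReal_pos.2 one_half_pos).ne'
    ENNReal.ofReal_ne_top]
  refine le_iInf₂ fun P hP => ?_
  rw [← ENNReal.ofReal_mul one_half_pos.le, abs_sub_comm, ← hP.1, ← hP.2]
  exact ENNReal.ofReal_le_ofReal (P.abs_sqrt_arcLen_sub_le_pathLen hs)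

theorem GBounded.exists_arcLen_le (hs : 3 / 2 < s) {U : Set (ℝ → En n)} (hU : GBounded s U) :
    ∃ M, ∀ γ ∈ U, arcLen γ ≤ M := by
  obtain ⟨-, γ₀, -, R, hR⟩ := hU
  refine ⟨(√(arcLen γ₀) + 1 / 2 * max R 0) ^ 2, fun γ hγ => ?_⟩
  have dist_le : ENNReal.ofReal |√(arcLen γ) - √(arcLen γ₀)| ≤
      ENNReal.ofReal (1 / 2 * max R 0) := by
    rw [ENNReal.ofReal_mul one_half_pos.le]
    exact (ofReal_abs_sqrt_arcLen_sub_le_geodDist hs γ₀ γ).trans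
      (mul_le_mul_right ((hR γ hγ).trans (ENNReal.ofReal_le_ofReal (le_max_left R 0))) _)
  rw [ENNReal.ofReal_le_ofReal_iff (by positivity)] at dist_le
  exact (sqrt_le_left (by positivity)).1 (by linarith [le_of_abs_le dist_le])

end ArcLength

/-- Lipschitz continuity of `√L`: for all `γ₀, γ₁ ∈ 𝓜` one has
`|√(L(γ₁)) − √(L(γ₀))| ≤ (1/2) · d_G(γ₁,γ₀)`; in particular the length functional `L`
is bounded on every `G`-bounded subset of `𝓜`. -/
theorem statement11 (s : ℝ) (hs : s ∈ Set.Ioo (3 / 2 : ℝ) 2) (n : ℕ) (hn : 2 ≤ n) :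
    (∀ γ₀ γ₁ : ℝ → En n, InM s γ₀ → InM s γ₁ →
      ENNReal.ofReal |Real.sqrt (arcLen γ₁) - Real.sqrt (arcLen γ₀)| ≤
        ENNReal.ofReal (1 / 2) * geodDist s γ₁ γ₀) ∧
    ∀ U : Set (ℝ → En n), GBounded s U → ∃ M : ℝ, ∀ γ ∈ U, arcLen γ ≤ M := by
  exact ⟨fun γ₀ γ₁ _ _ => ofReal_abs_sqrt_arcLen_sub_le_geodDist hs.1 γ₀ γ₁,
    fun _ hU => hU.exists_arcLen_le hs.1⟩
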